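/- arXiv:1312.3679 — 2 statements merged into one kernel-verified Lean document; each statement's English description precedes it below -/
import Mathlib

section
/- For every n ≥ 1 and every weakly semisimple x-monotone drawing D of the complete graph K_n, the number of unordered pairs of edges of D that cross an odd number of times is at least Z(n). (In particular, the monotone weakly semisimple odd crossing number of K_n is at least Z(n).) -/
/-- `Zval n` is Hill's conjectured value
`Z(n) = (1/4)⌊n/2⌋⌊(n−1)/2⌋⌊(n−2)/2⌋⌊(n−3)/2⌋` for the crossing number of `K n`.
(The product of the four floors is always divisible by 4, so natural division is exact.) -/
def Zval (n : ℕ) : ℕ :=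
  n / 2 * ((n - 1) / 2) * ((n - 2) / 2) * ((n - 3) / 2) / 4

/-- An x-monotone drawing of the complete graph `K n`: vertices `v i = (x i, 0)` with
`x` strictly increasing, and for each pair `i < j` a continuous function `e i j` on
`[x i, x j]` vanishing at the endpoints, whose graph is the arc of the edge `{i, j}`.
Edges avoid the intermediate vertices, any two distinct edges meet in finitely many
interior parameters, and at each such common point the difference changes sign
(a proper crossing). -/
structure XMonotoneDrawing (n : ℕ) where
  x : Fin n → ℝ
  x_strictMono : StrictMono x
  e : Fin n → Fin n → ℝ → ℝ
  cont : ∀ i j : Fin n, i < j → ContinuousOn (e i j) (Set.Icc (x i) (x j))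
  end_left : ∀ i j : Fin n, i < j → e i j (x i) = 0
  end_right : ∀ i j : Fin n, i < j → e i j (x j) = 0
  avoid_vertex : ∀ i m j : Fin n, i < m → m < j → e i j (x m) ≠ 0
  cross_finite : ∀ i j k l : Fin n, i < j → k < l → (i, j) ≠ (k, l) →
    {t : ℝ | max (x i) (x k) < t ∧ t < min (x j) (x l) ∧ e i j t = e k l t}.Finite
  sign_change : ∀ i j k l : Fin n, i < j → k < l → (i, j) ≠ (k, l) →
    ∀ t : ℝ, max (x i) (x k) < t → t < min (x j) (x l) → e i j t = e k l t →
      ∃ ε > (0 : ℝ), ∀ s : ℝ, max (x i) (x k) < s → t - ε < s → s < t →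
        ∀ u : ℝ, u < min (x j) (x l) → t < u → u < t + ε →
          (e i j s - e k l s) * (e i j u - e k l u) < 0

namespace XMonotoneDrawing

variable {n : ℕ}

/-- The set of parameters at which the edges `{i,j}` and `{k,l}` cross
(both edges are parametrized over the `x`-axis). -/
def crossSet (D : XMonotoneDrawing n) (i j k l : Fin n) : Set ℝ :=
  {t : ℝ | max (D.x i) (D.x k) < t ∧ t < min (D.x j) (D.x l) ∧ D.e i j t = D.e k l t}

/-- The number of crossings between the edges `{i,j}` and `{k,l}`. -/
noncomputable def crossCount (D : XMonotoneDrawing n) (i j k l : Fin n) : ℕ :=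
  (D.crossSet i j k l).ncard

/-- Two edges `{i,j}` and `{k,l}` are adjacent if they share an endpoint index. -/
def Adj (i j k l : Fin n) : Prop := i = k ∨ i = l ∨ j = k ∨ j = l

/-- A drawing is semisimple if no two adjacent edges cross. -/
def Semisimple (D : XMonotoneDrawing n) : Prop :=
  ∀ i j k l : Fin n, i < j → k < l → (i, j) ≠ (k, l) → Adj i j k l →
    D.crossCount i j k l = 0

/-- A drawing is weakly semisimple if every two adjacent edges cross an even
number of times. -/
def WeaklySemisimple (D : XMonotoneDrawing n) : Prop :=
  ∀ i j k l : Fin n, i < j → k < l → (i, j) ≠ (k, l) → Adj i j k l →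
    Even (D.crossCount i j k l)

/-- A drawing is simple if no two adjacent edges cross and every two non-adjacent
edges cross at most once. -/
def Simple (D : XMonotoneDrawing n) : Prop :=
  ∀ i j k l : Fin n, i < j → k < l → (i, j) ≠ (k, l) →
    (Adj i j k l → D.crossCount i j k l = 0) ∧
    (¬ Adj i j k l → D.crossCount i j k l ≤ 1)

/-- `cr D`: the total number of crossings of `D`. (Each unordered pair of distinct
edges is counted twice in the sum, whence the division by 2; `crossCount` is
symmetric in the two edges.) -/
noncomputable def cr (D : XMonotoneDrawing n) : ℕ :=
  (∑ p : (Fin n × Fin n) × (Fin n × Fin n),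
      if p.1.1 < p.1.2 ∧ p.2.1 < p.2.2 ∧ p.1 ≠ p.2 then
        D.crossCount p.1.1 p.1.2 p.2.1 p.2.2
      else 0) / 2

/-- `ocr D`: the number of unordered pairs of edges of `D` crossing an odd number
of times. (Each unordered pair appears twice as an ordered pair.) -/
noncomputable def ocr (D : XMonotoneDrawing n) : ℕ :=
  {p : (Fin n × Fin n) × (Fin n × Fin n) |
    p.1.1 < p.1.2 ∧ p.2.1 < p.2.2 ∧ p.1 ≠ p.2 ∧
      Odd (D.crossCount p.1.1 p.1.2 p.2.1 p.2.2)}.ncard / 2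

/-- The signature of the triple `i < j < k`: `true` (i.e. `+`) if the vertex `v j`
lies below the edge `{i, k}`, i.e. `e i k (x j) > 0`, and `false` (i.e. `−`) otherwise. -/
noncomputable def sig (D : XMonotoneDrawing n) (i j k : Fin n) : Bool :=
  if 0 < D.e i k (D.x j) then true else false

/-- `D` realizes the signature function `σ` if `σ_D` and `σ` agree on all
increasing triples. -/
def Realizes (D : XMonotoneDrawing n) (σ : Fin n → Fin n → Fin n → Bool) : Prop :=
  ∀ i j k : Fin n, i < j → j < k → D.sig i j k = σ i j k

/-- A drawing is pseudolinear if its edges extend to continuous curves over all of `ℝ`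
that avoid all vertices other than their endpoints and such that any two of these
extended curves cross exactly once (the crossing being a sign change of the difference). -/
def Pseudolinear (D : XMonotoneDrawing n) : Prop :=
  ∃ p : Fin n → Fin n → ℝ → ℝ,
    (∀ i j : Fin n, i < j → Continuous (p i j)) ∧
    (∀ i j : Fin n, i < j → ∀ t ∈ Set.Icc (D.x i) (D.x j), p i j t = D.e i j t) ∧
    (∀ i j m : Fin n, i < j → m ≠ i → m ≠ j → p i j (D.x m) ≠ 0) ∧
    (∀ i j k l : Fin n, i < j → k < l → (i, j) ≠ (k, l) →
      ∃ t : ℝ, p i j t = p k l t ∧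
        ∀ s u : ℝ, s < t → t < u →
          (p i j s - p k l s) * (p i j u - p k l u) < 0)

/-- The arc of the edge `{i, j}` as a subset of the plane `ℝ × ℝ`. -/
def edgeArc (D : XMonotoneDrawing n) (i j : Fin n) : Set (ℝ × ℝ) :=
  {q : ℝ × ℝ | D.x i ≤ q.1 ∧ q.1 ≤ D.x j ∧ q.2 = D.e i j q.1}

/-- The union of all edge arcs of the drawing. -/
def arcUnion (D : XMonotoneDrawing n) : Set (ℝ × ℝ) :=
  ⋃ i : Fin n, ⋃ j : Fin n, ⋃ (_ : i < j), D.edgeArc i j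

end XMonotoneDrawing

namespace Sig

variable {n : ℕ}

/-- With respect to a signature function `σ`, the vertex `m ∉ {i, j}` is on the left of
the directed edge `(i, j)` (where `i < j`). -/
def LeftOf (σ : Fin n → Fin n → Fin n → Bool) (i j m : Fin n) : Prop :=
  (i < m ∧ m < j ∧ σ i m j = false) ∨ (m < i ∧ σ m i j = true) ∨ (j < m ∧ σ i j m = true)

/-- The number of vertices on the left of the directed edge `(i, j)`. -/
noncomputable def leftCount (σ : Fin n → Fin n → Fin n → Bool) (i j : Fin n) : ℕ :=
  {m : Fin n | LeftOf σ i j m}.ncard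

/-- The edge `{i, j}` (with `i < j`) is a `k`-edge of `σ` if `min(ℓ, n − 2 − ℓ) = k`,
where `ℓ` is the number of vertices on its left. -/
def IsKEdge (σ : Fin n → Fin n → Fin n → Bool) (k : ℕ) (i j : Fin n) : Prop :=
  min (leftCount σ i j) (n - 2 - leftCount σ i j) = k

/-- `Ek σ k`: the number of `k`-edges of `σ`. -/
noncomputable def Ek (σ : Fin n → Fin n → Fin n → Bool) (k : ℕ) : ℕ :=
  {p : Fin n × Fin n | p.1 < p.2 ∧ IsKEdge σ k p.1 p.2}.ncard

/-- `Ele σ k = E_{≤k}(σ)`: the number of `≤k`-edges of `σ`. -/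
noncomputable def Ele (σ : Fin n → Fin n → Fin n → Bool) (k : ℕ) : ℕ :=
  ∑ i ∈ Finset.range (k + 1), Ek σ i

/-- `Elele σ k = E_{≤≤k}(σ) = Σ_{j=0}^{k} E_{≤j}(σ)`. -/
noncomputable def Elele (σ : Fin n → Fin n → Fin n → Bool) (k : ℕ) : ℕ :=
  ∑ j ∈ Finset.range (k + 1), Ele σ j

/-- `E_{≤≤k}` with an integer index, which vanishes for negative `k`. -/
noncomputable def ElelZ (σ : Fin n → Fin n → Fin n → Bool) (k : ℤ) : ℕ :=
  if 0 ≤ k then Elele σ k.toNat else 0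

/-- The left count of the edge `{i, j}` in the drawing restricted to the first
`n − 1` vertices (the last vertex deleted). -/
noncomputable def leftCountRes (σ : Fin n → Fin n → Fin n → Bool) (i j : Fin n) : ℕ :=
  {m : Fin n | LeftOf σ i j m ∧ (m : ℕ) + 1 < n}.ncard

/-- The edge `{i, j}` is a `k`-edge of the restriction of `σ` to the first `n − 1`
vertices (there `min(ℓ', (n−1) − 2 − ℓ') = k`). -/
def IsKEdgeRes (σ : Fin n → Fin n → Fin n → Bool) (k : ℕ) (i j : Fin n) : Prop :=
  min (leftCountRes σ i j) (n - 3 - leftCountRes σ i j) = k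

/-- The edge `{i, j}` is a `(D,D')`-invariant `≤k`-edge: it avoids the last vertex and
is an `m`-edge with `m ≤ k` both in `σ` and in the restriction of `σ` to the first
`n − 1` vertices. -/
def InvariantLeK (σ : Fin n → Fin n → Fin n → Bool) (k : ℕ) (i j : Fin n) : Prop :=
  (j : ℕ) + 1 < n ∧ (∃ m ≤ k, IsKEdge σ m i j) ∧ (∃ m ≤ k, IsKEdgeRes σ m i j)

/-- The ten 4-tuple forms allowed in signature functions of semisimple x-monotone
drawings: `++++, −−−−, ++−−, −−++, −++−, +−−+, −−−+, +++−, +−−−, −+++`. -/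
def AllowedForm (a b c d : Bool) : Prop :=
  (a, b, c, d) ∈ ([(true, true, true, true), (false, false, false, false),
    (true, true, false, false), (false, false, true, true),
    (false, true, true, false), (true, false, false, true),
    (false, false, false, true), (true, true, true, false),
    (true, false, false, false), (false, true, true, true)] :
      List (Bool × Bool × Bool × Bool))

/-- A signature function is admissible if every increasing 4-tuple is of one of the
ten allowed forms. -/
def Admissible (σ : Fin n → Fin n → Fin n → Bool) : Prop :=
  ∀ a b c d : Fin n, a < b → b < c → c < d →
    AllowedForm (σ a b c) (σ a b d) (σ a c d) (σ b c d)

/-- The six convex forms: `++++, −−−−, ++−−, −−++, −++−, +−−+`. -/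
def ConvexForm (a b c d : Bool) : Prop :=
  (a, b, c, d) ∈ ([(true, true, true, true), (false, false, false, false),
    (true, true, false, false), (false, false, true, true),
    (false, true, true, false), (true, false, false, true)] :
      List (Bool × Bool × Bool × Bool))

/-- The 4-tuple `a < b < c < d` is convex in `σ`. -/
def Convex4 (σ : Fin n → Fin n → Fin n → Bool) (a b c d : Fin n) : Prop :=
  ConvexForm (σ a b c) (σ a b d) (σ a c d) (σ b c d)

/-- The eight 4-tuple forms of pseudolinear x-monotone drawings (the sign-monotone
sequences): `++++, +++−, ++−−, +−−−, −−−−, −−−+, −−++, −+++`. -/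
def PLForm (a b c d : Bool) : Prop :=
  (a, b, c, d) ∈ ([(true, true, true, true), (true, true, true, false),
    (true, true, false, false), (true, false, false, false),
    (false, false, false, false), (false, false, false, true),
    (false, false, true, true), (false, true, true, true)] :
      List (Bool × Bool × Bool × Bool))

/-- The relation `j ⋖ k` on `{j : i < j}`: `j ⋖ k` iff (`j < k` and `σ i j k = +`)
or (`k < j` and `σ i k j = −`). -/
def Below (σ : Fin n → Fin n → Fin n → Bool) (i j k : Fin n) : Prop :=
  (j < k ∧ σ i j k = true) ∨ (k < j ∧ σ i k j = false)

end Sig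

/-!
Continuity and the sign changes at the crossings show that the signature of a drawing determines the
parity of the number of crossings of any two disjoint edges, and weak semisimplicity makes the
signature admissible and excludes odd crossings of adjacent edges. In an admissible signature, the
edges on `a < b < c < d` that separate the two remaining vertices and the pairs of edges crossing an
odd number of times add up to three. Hence the odd crossing number is `3 * n.choose 4` minus the sum
over all edges of the product of the left count and the right count.

This product is a constant minus a sum of excesses of integers over the left and the right count, so
the sum of all products is an explicit constant minus a sum of numbers `E_{≤≤k}`, and it remains to
show that `E_{≤≤k}` is at least `3 * (k + 3).choose 3` if `2 * (k + 1) < n`. This follows by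
induction on the number of vertices. Deleting the last vertex `v` decreases `E_{≤≤k}` by the
contribution of the edges at `v`, on which the left counts take every value once, and by the number
of invariant edges, which a pigeonhole argument at each vertex bounds from below.
-/

open Finset

section Rank

variable {α : Type*} {S : Finset α} {r : α → α → Prop}

/-- The relation `r`, restricted to the finite set `S`, is a strict total order. -/
structure IsStrictTotalOn (S : Finset α) (r : α → α → Prop) : Prop where
  irrefl : ∀ a ∈ S, ¬ r a a
  trans : ∀ a ∈ S, ∀ b ∈ S, ∀ c ∈ S, r a b → r b c → r a c
  total : ∀ a ∈ S, ∀ b ∈ S, a ≠ b → r a b ∨ r b a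

theorem isStrictTotalOn_lt [LinearOrder α] (S : Finset α) : IsStrictTotalOn S (· < ·) where
  irrefl a _ := lt_irrefl a
  trans _ _ _ _ _ _ := lt_trans
  total _ _ _ _ := lt_or_gt_of_ne

namespace IsStrictTotalOn

variable [DecidableRel r]

theorem card_filter_lt_card_filter (h : IsStrictTotalOn S r) {a b : α} (ha : a ∈ S) (hb : b ∈ S)
    (hab : r a b) : #{m ∈ S | r m a} < #{m ∈ S | r m b} := by
  refine card_lt_card ⟨fun m hm => ?_, fun hsub => ?_⟩
  · rw [mem_filter] at hm ⊢
    exact ⟨hm.1, h.trans m hm.1 a ha b hb hm.2 hab⟩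
  · exact h.irrefl a ha (mem_filter.1 (hsub (mem_filter.2 ⟨ha, hab⟩))).2

theorem image_rank (h : IsStrictTotalOn S r) :
    S.image (fun i => #{m ∈ S | r m i}) = range #S := by
  refine eq_of_subset_of_card_le (image_subset_iff.2 fun i hi => ?_) ?_
  · refine mem_range.2 (card_lt_card (filter_ssubset.2 ⟨i, hi, h.irrefl i hi⟩))
  · rw [card_image_of_injOn, card_range]
    intro a ha b hb hab
    by_contra hne
    rcases h.total a ha b hb hne with hr | hr
    · exact (h.card_filter_lt_card_filter ha hb hr).ne hab
    · exact (h.card_filter_lt_card_filter hb ha hr).ne' hab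

theorem sum_comp_rank {M : Type*} [AddCommMonoid M] (h : IsStrictTotalOn S r) (g : ℕ → M) :
    ∑ i ∈ S, g #{m ∈ S | r m i} = ∑ t ∈ range #S, g t := by
  rw [← h.image_rank, sum_image]
  exact card_image_iff.1 (by rw [h.image_rank, card_range])

theorem card_rank_lt (h : IsStrictTotalOn S r) {t : ℕ} (ht : t ≤ #S) :
    #{i ∈ S | #{m ∈ S | r m i} < t} = t := by
  have hrange : {q ∈ range #S | q < t} = range t := by
    ext q
    simp only [mem_filter, mem_range]
    omega
  rw [card_filter, h.sum_comp_rank (fun q => if q < t then 1 else 0), ← card_filter, hrange,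
    card_range]

end IsStrictTotalOn

end Rank

section Binomial

theorem sum_range_tsub_right (a x : ℕ) : ∑ k ∈ range a, (k - x) = (a - x).choose 2 := by
  induction a with
  | zero => simp
  | succ a ih =>
    rw [sum_range_succ, ih]
    rcases le_or_gt x a with hx | hx
    · rw [Nat.succ_sub hx, Nat.choose_succ_succ' _ 1, Nat.choose_one_right, add_comm]
    · simp [Nat.sub_eq_zero_of_le hx.le, Nat.sub_eq_zero_of_le (Nat.succ_le_of_lt hx)]

theorem sum_range_tsub_left {k n : ℕ} (h : k ≤ n) :
    ∑ t ∈ range n, (k - t) = (k + 1).choose 2 := by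
  induction k generalizing n with
  | zero => simp
  | succ k ih =>
    obtain ⟨n, rfl⟩ := Nat.exists_eq_add_of_le' (Nat.one_le_of_lt h)
    rw [sum_range_succ', Nat.choose_succ_succ' _ 1, Nat.choose_one_right, add_comm]
    simp only [Nat.add_sub_add_right, Nat.sub_zero]
    rw [ih (Nat.le_of_succ_le_succ h)]

theorem sum_range_add_two_choose_three (a : ℕ) :
    ∑ k ∈ range a, (k + 2).choose 3 = (a + 2).choose 4 := by
  induction a with
  | zero => rfl
  | succ a ih =>
    rw [sum_range_succ, ih, add_right_comm a 1 2, Nat.choose_succ_succ' (a + 2) 3, add_comm]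

theorem choose_two_mul_choose_two_eq (a b : ℕ) :
    3 * (a + b + 1).choose 4 + 3 * (a + 2).choose 4 + 3 * (b + 2).choose 4 =
      (a + b + 1).choose 2 * (a.choose 2 + b.choose 2) + a.choose 2 * b.choose 2 := by
  have choose_four (m : ℕ) :
      (m.choose 4 : ℚ) = m * (m - 1) * (m - 2) * (m - 3) / 24 := by
    rw [Nat.cast_choose_eq_descPochhammer_div]
    simp [descPochhammer_succ_right, Nat.factorial]
  qify
  simp only [choose_four, Nat.cast_choose_two]
  push_cast
  ring

theorem mul_add_sum_tsub {a b x y : ℕ} (hba : b ≤ a) (hab : a ≤ b + 1) (hxy : x + y + 1 = a + b) :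
    x * y + ∑ k ∈ range a, ((k - x) + (k - y)) + ∑ k ∈ range b, ((k - x) + (k - y)) =
      a.choose 2 + b.choose 2 := by
  wlog h : x ≤ y generalizing x y
  · rw [← this (x := y) (y := x) (by omega) (by omega), mul_comm y]
    simp only [add_comm]
  simp only [sum_add_distrib, sum_range_tsub_right]
  obtain ⟨u, rfl⟩ := Nat.exists_eq_add_of_le (show x ≤ b by omega)
  obtain ⟨w, rfl⟩ := Nat.exists_eq_add_of_le (show x ≤ a by omega)
  have hay : (x + w - y).choose 2 = 0 := Nat.choose_eq_zero_of_lt (by omega)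
  have hby : (x + u - y).choose 2 = 0 := Nat.choose_eq_zero_of_lt (by omega)
  rw [hay, hby, Nat.add_sub_cancel_left, Nat.add_sub_cancel_left]
  have hy : (y : ℚ) = x + u + w - 1 := by
    have : y + 1 = x + u + w := by omega
    rw [eq_sub_iff_add_eq]
    exact_mod_cast this
  qify
  simp only [hy, Nat.cast_choose_two]
  push_cast
  ring

theorem Zval_eq_choose_two_mul_choose_two (n : ℕ) :
    Zval n = (n / 2).choose 2 * ((n - 1) / 2).choose 2 := by
  have hsub (k : ℕ) : (k - 2) / 2 = k / 2 - 1 := by omega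
  rw [Zval, show n - 3 = n - 1 - 2 by omega, hsub, hsub]
  refine Nat.div_eq_of_eq_mul_left four_pos ?_
  have htwo (m : ℕ) : m.choose 2 * 2 = m * (m - 1) := by
    rw [Nat.choose_two_right, Nat.div_mul_cancel (Nat.even_mul_pred_self m).two_dvd]
  calc n / 2 * ((n - 1) / 2) * (n / 2 - 1) * ((n - 1) / 2 - 1)
      = ((n / 2).choose 2 * 2) * (((n - 1) / 2).choose 2 * 2) := by rw [htwo, htwo]; ring
    _ = (n / 2).choose 2 * ((n - 1) / 2).choose 2 * 4 := by ring

end Binomial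

section EdgeSums

variable {α M : Type*} [LinearOrder α] [AddCommMonoid M] {S : Finset α}

/-- The edges of the complete graph on the vertex set `S`; the edge between `i < j` is
represented by the pair `(i, j)`. -/
def edgesOn (S : Finset α) : Finset (α × α) := {p ∈ S ×ˢ S | p.1 < p.2}

theorem mem_edgesOn {p : α × α} : p ∈ edgesOn S ↔ p.1 ∈ S ∧ p.2 ∈ S ∧ p.1 < p.2 := by
  simp [edgesOn, and_assoc]

theorem sum_edgesOn_eq_sum_sum_filter (f : α × α → M) :
    ∑ p ∈ edgesOn S, f p = ∑ i ∈ S, ∑ j ∈ S with i < j, f (i, j) := by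
  simp only [edgesOn, sum_filter, sum_product]

theorem card_filter_edgesOn (P : α × α → Prop) [DecidablePred P] :
    #{p ∈ edgesOn S | P p} = ∑ i ∈ S, #{j ∈ S | i < j ∧ P (i, j)} := by
  simp only [card_filter, sum_edgesOn_eq_sum_sum_filter, sum_filter, ite_and]

theorem sum_edgesOn_insert {v : α} (hv : ∀ x ∈ S, x < v) (f : α × α → M) :
    ∑ p ∈ edgesOn (insert v S), f p = ∑ p ∈ edgesOn S, f p + ∑ i ∈ S, f (i, v) := by
  have hvS : v ∉ S := fun h => lt_irrefl v (hv v h)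
  have h0 : ∀ x ∈ S, ¬ v < x := fun x hx => (hv x hx).not_gt
  simp only [sum_edgesOn_eq_sum_sum_filter, sum_filter]
  rw [sum_insert hvS, sum_insert hvS, if_neg (lt_irrefl v), zero_add,
    sum_eq_zero fun x hx => if_neg (h0 x hx), zero_add, ← sum_add_distrib]
  refine sum_congr rfl fun i hi => ?_
  rw [sum_insert hvS, if_pos (hv i hi), add_comm]

theorem card_edgesOn (S : Finset α) : #(edgesOn S) = (#S).choose 2 := by
  induction S using Finset.induction_on_max with
  | empty => rfl
  | insert v S hv ih =>
    rw [card_eq_sum_ones, sum_edgesOn_insert hv, ← card_eq_sum_ones, ← card_eq_sum_ones, ih,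
      card_insert_of_notMem fun h => lt_irrefl v (hv v h), Nat.choose_succ_succ' _ 1,
      Nat.choose_one_right, add_comm]

theorem sum_offDiag_eq_sum_edgesOn (f : α → α → M) :
    ∑ p ∈ S.offDiag, f p.1 p.2 = ∑ p ∈ edgesOn S, (f p.1 p.2 + f p.2 p.1) := by
  have hlt : {p ∈ S.offDiag | p.1 < p.2} = edgesOn S := by
    ext p
    simp only [mem_filter, mem_offDiag, mem_edgesOn]
    grind
  rw [sum_add_distrib, ← sum_filter_add_sum_filter_not S.offDiag (fun p => p.1 < p.2), hlt]
  congr 1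
  refine sum_nbij' Prod.swap Prod.swap ?_ ?_ ?_ ?_ ?_ <;>
    simp only [mem_filter, mem_offDiag, mem_edgesOn] <;> grind

/-- Two edges are disjoint if they have no common endpoint. -/
def DisjointEdges (p q : α × α) : Prop := p.1 ≠ q.1 ∧ p.1 ≠ q.2 ∧ p.2 ≠ q.1 ∧ p.2 ≠ q.2

theorem card_filter_powersetCard_four {p q : α × α} (hp : p ∈ edgesOn S) (hq : q ∈ edgesOn S)
    (h : DisjointEdges p q) :
    #{Q ∈ powersetCard 4 S | p ∈ edgesOn Q ∧ q ∈ edgesOn Q} = 1 := by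
  rw [mem_edgesOn] at hp hq
  have hcard : #{p.1, p.2, q.1, q.2} = 4 := by
    obtain ⟨h1, h2, h3, h4⟩ := h
    simp [h1, h2, h3, h4, hp.2.2.ne, hq.2.2.ne]
  rw [card_eq_one]
  refine ⟨{p.1, p.2, q.1, q.2}, ?_⟩
  ext Q
  simp only [mem_filter, mem_powersetCard, mem_edgesOn, mem_singleton]
  constructor
  · rintro ⟨⟨-, hQ⟩, hpQ, hqQ⟩
    refine (eq_of_subset_of_card_le ?_ (by rw [hQ, hcard])).symm
    simp [insert_subset_iff, hpQ, hqQ]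
  · rintro rfl
    simp [hcard, insert_subset_iff, hp, hq]

theorem edgesOn_mono {T : Finset α} (h : T ⊆ S) : edgesOn T ⊆ edgesOn S :=
  filter_subset_filter _ (product_subset_product h h)

theorem sum_edgesOn_sum_edgesOn_eq_sum_powersetCard {F : α × α → α × α → M}
    (hF : ∀ p ∈ edgesOn S, ∀ q ∈ edgesOn S, ¬ DisjointEdges p q → F p q = 0) :
    ∑ p ∈ edgesOn S, ∑ q ∈ edgesOn S, F p q =
      ∑ Q ∈ powersetCard 4 S, ∑ p ∈ edgesOn Q, ∑ q ∈ edgesOn Q, F p q := by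
  have hQ : ∀ Q ∈ powersetCard 4 S, ∑ p ∈ edgesOn Q, ∑ q ∈ edgesOn Q, F p q =
      ∑ p ∈ edgesOn S, ∑ q ∈ edgesOn S, if p ∈ edgesOn Q ∧ q ∈ edgesOn Q then F p q else 0 := by
    intro Q hQ
    have hfilter : {p ∈ edgesOn S | p ∈ edgesOn Q} = edgesOn Q := by
      rw [filter_mem_eq_inter, inter_eq_right.2 (edgesOn_mono (mem_powersetCard.1 hQ).1)]
    simp only [ite_and, sum_ite_irrel, sum_const_zero, ← sum_filter, hfilter]
  rw [sum_congr rfl hQ, eq_comm, sum_comm]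
  refine sum_congr rfl fun p hp => ?_
  rw [sum_comm]
  refine sum_congr rfl fun q hq => ?_
  rw [← sum_filter, sum_const]
  by_cases hpq : DisjointEdges p q
  · rw [card_filter_powersetCard_four hp hq hpq, one_smul]
  · rw [hF p hp q hq hpq, smul_zero]

theorem edgesOn_quadruple {a b c d : α} (hab : a < b) (hbc : b < c) (hcd : c < d) :
    edgesOn {a, b, c, d} = {(a, b), (a, c), (a, d), (b, c), (b, d), (c, d)} := by
  ext ⟨x, y⟩
  simp only [mem_edgesOn, mem_insert, mem_singleton, Prod.mk.injEq]
  grind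

theorem exists_lt_of_card_eq_four {Q : Finset α} (hQ : #Q = 4) :
    ∃ a b c d, a < b ∧ b < c ∧ c < d ∧ Q = {a, b, c, d} := by
  let f := Q.orderEmbOfFin hQ
  refine ⟨f 0, f 1, f 2, f 3, f.strictMono (by decide), f.strictMono (by decide),
    f.strictMono (by decide), ?_⟩
  ext x
  rw [← Q.image_orderEmbOfFin_univ hQ]
  simp [Fin.exists_fin_succ, f, -image_orderEmbOfFin_univ, eq_comm]

/-- The sum of `F` over the six ordered pairs of disjoint edges spanned by `a < b < c < d`. -/
def matchingSum (F : α × α → α × α → M) (a b c d : α) : M :=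
  F (a, b) (c, d) + F (a, c) (b, d) + F (a, d) (b, c) +
    F (b, c) (a, d) + F (b, d) (a, c) + F (c, d) (a, b)

theorem sum_edgesOn_quadruple {F : α × α → α × α → M} {a b c d : α}
    (hab : a < b) (hbc : b < c) (hcd : c < d)
    (hF : ∀ p ∈ edgesOn {a, b, c, d}, ∀ q ∈ edgesOn {a, b, c, d}, ¬ DisjointEdges p q →
      F p q = 0) :
    ∑ p ∈ edgesOn {a, b, c, d}, ∑ q ∈ edgesOn {a, b, c, d}, F p q = matchingSum F a b c d := by
  have hac := (hab.trans hbc).ne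
  have hbd := (hbc.trans hcd).ne
  rw [edgesOn_quadruple hab hbc hcd] at hF ⊢
  simp only [mem_insert, mem_singleton, forall_eq_or_imp, forall_eq, DisjointEdges] at hF
  simp only [ne_eq, not_true_eq_false, false_and, and_false, not_false_eq_true,
    forall_const] at hF
  simp [hF, hab.ne, hbc.ne, hcd.ne, hac, hbd, matchingSum, add_assoc]

theorem sum_edgesOn_sum_edgesOn_of_matchingSum {F : α × α → α × α → M} {C : M}
    (hF : ∀ p ∈ edgesOn S, ∀ q ∈ edgesOn S, ¬ DisjointEdges p q → F p q = 0)
    (hC : ∀ a b c d, a < b → b < c → c < d → matchingSum F a b c d = C) :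
    ∑ p ∈ edgesOn S, ∑ q ∈ edgesOn S, F p q = (#S).choose 4 • C := by
  rw [sum_edgesOn_sum_edgesOn_eq_sum_powersetCard hF, ← card_powersetCard, ← sum_const]
  refine sum_congr rfl fun Q hQ => ?_
  obtain ⟨hQS, hQ⟩ := mem_powersetCard.1 hQ
  obtain ⟨a, b, c, d, hab, hbc, hcd, rfl⟩ := exists_lt_of_card_eq_four hQ
  rw [sum_edgesOn_quadruple hab hbc hcd fun p hp q hq =>
    hF p (edgesOn_mono hQS hp) q (edgesOn_mono hQS hq), hC a b c d hab hbc hcd]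

end EdgeSums

namespace Sig

variable {n : ℕ} {σ : Fin n → Fin n → Fin n → Bool} {S T : Finset (Fin n)} {i j m v : Fin n}

section Orders

instance : Decidable (LeftOf σ i j m) := inferInstanceAs (Decidable (_ ∨ _ ∨ _))

theorem leftOf_iff_of_lt_left (hm : m < i) (hij : i < j) : LeftOf σ i j m ↔ σ m i j = true := by
  simp [LeftOf, hm, hm.not_gt, (hm.trans hij).not_gt]

theorem leftOf_iff_of_between (him : i < m) (hmj : m < j) : LeftOf σ i j m ↔ σ i m j = false := by
  simp [LeftOf, him, hmj, him.not_gt, hmj.not_gt]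

theorem leftOf_iff_of_right_lt (hij : i < j) (hm : j < m) : LeftOf σ i j m ↔ σ i j m = true := by
  simp [LeftOf, hm, hm.not_gt, (hij.trans hm).not_gt]

/-- The signature of the drawing reflected in the `x`-axis; it exchanges left and right. -/
def mirror (σ : Fin n → Fin n → Fin n → Bool) : Fin n → Fin n → Fin n → Bool :=
  fun i j k => !σ i j k

theorem leftOf_mirror_iff (hij : i < j) :
    LeftOf (mirror σ) i j m ↔ m ≠ i ∧ m ≠ j ∧ ¬ LeftOf σ i j m := by
  simp only [LeftOf, mirror]
  grind

theorem allowedForm_iff {a b c d : Bool} :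
    AllowedForm a b c d ↔ (a = c → b = a) ∧ (b = d → c = b) := by
  revert a b c d
  unfold AllowedForm
  decide

namespace Admissible

protected theorem mirror (hσ : Admissible σ) : Admissible (mirror σ) := by
  intro a b c d hab hbc hcd
  have h := allowedForm_iff.1 (hσ a b c d hab hbc hcd)
  simpa only [allowedForm_iff, Sig.mirror, Bool.not_inj_iff] using h

theorem isStrictTotalOn_leftOf_of_forall_lt (hσ : Admissible σ) (hS : ∀ x ∈ S, i < x) :
    IsStrictTotalOn S fun a b => LeftOf σ i b a where
  irrefl a ha := by simp [LeftOf, (hS a ha).not_gt]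
  trans a ha b hb c hc := by
    have h (x y z) (hx : x ∈ S) (hxy : x < y) (hyz : y < z) :=
      allowedForm_iff.1 (hσ i x y z (hS x hx) hxy hyz)
    simp only [LeftOf]
    grind
  total a ha b hb hab := by
    simp only [LeftOf]
    grind

theorem isStrictTotalOn_leftOf_of_forall_gt (hσ : Admissible σ) (hS : ∀ x ∈ S, x < v) :
    IsStrictTotalOn S fun a b => LeftOf σ b v a where
  irrefl a ha := by simp [LeftOf, (hS a ha).not_gt]
  trans a ha b hb c hc := by
    have h (x y z) (hz : z ∈ S) (hxy : x < y) (hyz : y < z) :=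
      allowedForm_iff.1 (hσ x y z v hxy hyz (hS z hz))
    simp only [LeftOf]
    grind
  total a ha b hb hab := by
    simp only [LeftOf]
    grind

end Admissible

end Orders

section EdgeWeight

/-- The number of vertices of `S` to the left of the edge `(i, j)`: `leftCount` for the drawing
restricted to `S`. -/
def leftCountOn (σ : Fin n → Fin n → Fin n → Bool) (S : Finset (Fin n)) (i j : Fin n) : ℕ :=
  #{m ∈ S | LeftOf σ i j m}

theorem leftCountOn_add_leftCountOn_mirror (hi : i ∈ S) (hj : j ∈ S) (hij : i < j) :
    leftCountOn σ S i j + leftCountOn (mirror σ) S i j + 2 = #S := by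
  have hright : {m ∈ S | ¬ LeftOf σ i j m} =
      insert i (insert j {m ∈ S | LeftOf (mirror σ) i j m}) := by
    ext m
    simp only [mem_filter, mem_insert, leftOf_mirror_iff hij]
    grind [LeftOf]
  rw [← card_filter_add_card_filter_not (s := S) (LeftOf σ i j), hright, card_insert_of_notMem,
    card_insert_of_notMem]
  · rfl
  · simp [leftOf_mirror_iff hij]
  · simp [leftOf_mirror_iff hij, hij.ne]

/-- The sum over the edges on `S` of the excesses of `K` over their left and right counts. Every
`j`-edge with `j < K` is counted `K - j` times, so for `2 * K < #S` this is `E_{≤≤K-1}` of the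
drawing restricted to `S`. -/
def edgeWeight (σ : Fin n → Fin n → Fin n → Bool) (S : Finset (Fin n)) (K : ℕ) : ℕ :=
  ∑ p ∈ edgesOn S, ((K - leftCountOn σ S p.1 p.2) + (K - leftCountOn (mirror σ) S p.1 p.2))

/-- The edges on `T` with at most `K` vertices of `T` on their left and for which `v` is not on
the left. These are the edges whose excess of `K + 1` over the left count in `insert v T` is larger
than the excess of `K` over the left count in `T`. -/
def invariantEdges (σ : Fin n → Fin n → Fin n → Bool) (T : Finset (Fin n)) (v : Fin n) (K : ℕ) :
    Finset (Fin n × Fin n) :=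
  {p ∈ edgesOn T | ¬ LeftOf σ p.1 p.2 v ∧ leftCountOn σ T p.1 p.2 ≤ K}

theorem tsub_leftCountOn_insert (hv : v ∉ T) (i j : Fin n) (K : ℕ) :
    K + 1 - leftCountOn σ (insert v T) i j = (K - leftCountOn σ T i j) +
      if ¬ LeftOf σ i j v ∧ leftCountOn σ T i j ≤ K then 1 else 0 := by
  have hcount : leftCountOn σ (insert v T) i j =
      leftCountOn σ T i j + if LeftOf σ i j v then 1 else 0 := by
    rw [leftCountOn, filter_insert]
    split_ifs
    · rw [card_insert_of_notMem (by simp [hv]), leftCountOn]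
    · rfl
  grind

theorem edgeWeight_insert (hv : ∀ x ∈ T, x < v) (K : ℕ) :
    edgeWeight σ (insert v T) (K + 1) = edgeWeight σ T K +
      (#(invariantEdges σ T v K) + #(invariantEdges (mirror σ) T v K)) +
      (∑ i ∈ T, (K + 1 - leftCountOn σ (insert v T) i v) +
        ∑ i ∈ T, (K + 1 - leftCountOn (mirror σ) (insert v T) i v)) := by
  have hvT : v ∉ T := fun h => lt_irrefl v (hv v h)
  simp only [edgeWeight, invariantEdges, card_filter]
  rw [sum_edgesOn_insert hv]
  simp only [tsub_leftCountOn_insert hvT _ _ K, sum_add_distrib]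
  ring

theorem Admissible.sum_tsub_leftCountOn_last (hσ : Admissible σ) (hv : ∀ x ∈ T, x < v) {K : ℕ}
    (hK : K ≤ #T) :
    ∑ i ∈ T, (K - leftCountOn σ (insert v T) i v) = (K + 1).choose 2 := by
  rw [← sum_range_tsub_left hK,
    ← (hσ.isStrictTotalOn_leftOf_of_forall_gt hv).sum_comp_rank (fun q => K - q)]
  refine sum_congr rfl fun i hi => ?_
  rw [leftCountOn, filter_insert, if_neg (by simp [LeftOf, (hv i hi).not_gt])]

theorem Admissible.leftCountOn_le (hσ : Admissible σ) (hv : ∀ x ∈ T, x < v)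
    (hjT : j ∈ T) (hij : i < j) (hj : ¬ LeftOf σ i j v) :
    leftCountOn σ T i j ≤ #{m ∈ T | m < i} +
      #{m ∈ {m ∈ T | i < m ∧ ¬ LeftOf σ i m v} | LeftOf σ i j m} := by
  have horder := hσ.isStrictTotalOn_leftOf_of_forall_lt (i := i) (S := {m ∈ insert v T | i < m})
    fun x hx => (mem_filter.1 hx).2
  rw [leftCountOn]
  refine (card_le_card fun m hm => ?_).trans (card_union_le _ _)
  obtain ⟨hmT, hm⟩ := mem_filter.1 hm
  rcases lt_trichotomy m i with hmi | rfl | him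
  · exact mem_union_left _ (mem_filter.2 ⟨hmT, hmi⟩)
  · simp [LeftOf, hij.not_gt] at hm
  · refine mem_union_right _ (mem_filter.2 ⟨mem_filter.2 ⟨hmT, him, fun hmv => hj ?_⟩, hm⟩)
    exact horder.trans v (by simp [hij.trans (hv j hjT)]) m (by simp [hmT, him]) j
      (by simp [hjT, hij]) hmv hm

theorem Admissible.le_card_filter_invariant (hσ : Admissible σ) (hv : ∀ x ∈ T, x < v) {K t : ℕ}
    (ht : t ≤ #{j ∈ T | i < j ∧ ¬ LeftOf σ i j v}) (htK : #{m ∈ T | m < i} + t ≤ K + 1) :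
    t ≤ #{j ∈ T | i < j ∧ ¬ LeftOf σ i j v ∧ leftCountOn σ T i j ≤ K} := by
  have horder := hσ.isStrictTotalOn_leftOf_of_forall_lt (i := i)
    (S := {j ∈ T | i < j ∧ ¬ LeftOf σ i j v}) fun x hx => (mem_filter.1 hx).2.1
  rw [← horder.card_rank_lt ht]
  refine card_le_card fun j hj => ?_
  rw [mem_filter, mem_filter] at hj
  obtain ⟨⟨hjT, hij, hjv⟩, hrank⟩ := hj
  have := hσ.leftCountOn_le hv hjT hij hjv
  exact mem_filter.2 ⟨hjT, hij, hjv, by omega⟩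

-- If `q` vertices of `T` precede `i`, then there are `K + 1 - q` vertices `j > i` of `T` such that
-- `v` is not on the left of `(i, j)`, or as many such that it is not on the right. The first
-- `K + 1 - q` of these in the order around `i` are the second endpoints of invariant edges.
theorem Admissible.choose_two_le_card_invariantEdges (hσ : Admissible σ) (hv : ∀ x ∈ T, x < v)
    {K : ℕ} (hK : 2 * K + 1 < #T) :
    (K + 2).choose 2 ≤ #(invariantEdges σ T v K) + #(invariantEdges (mirror σ) T v K) := by
  rw [← sum_range_tsub_left (show K + 1 ≤ #T by omega),
    ← (isStrictTotalOn_lt T).sum_comp_rank (fun q => K + 1 - q), invariantEdges, invariantEdges,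
    card_filter_edgesOn, card_filter_edgesOn, ← sum_add_distrib]
  refine sum_le_sum fun i hi => ?_
  have hcard : #{j ∈ T | i < j ∧ ¬ LeftOf σ i j v} + #{j ∈ T | i < j ∧ ¬ LeftOf (mirror σ) i j v} +
      1 + #{m ∈ T | m < i} = #T := by
    have hmirror : {j ∈ T | i < j ∧ ¬ LeftOf (mirror σ) i j v} =
        {j ∈ {j ∈ T | i < j} | ¬ ¬ LeftOf σ i j v} := by
      ext j
      simp only [mem_filter]
      grind [leftOf_mirror_iff]
    have hle : {j ∈ T | ¬ i < j} = insert i {m ∈ T | m < i} := by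
      ext j
      simp only [mem_filter, mem_insert]
      grind
    rw [hmirror, ← filter_filter, card_filter_add_card_filter_not, add_assoc, add_comm 1,
      ← card_insert_of_notMem (by simp : i ∉ {m ∈ T | m < i}), ← hle,
      card_filter_add_card_filter_not]
  rcases le_or_gt (K + 1) #{m ∈ T | m < i} with hi | hi
  · simp [Nat.sub_eq_zero_of_le hi]
  rcases le_or_gt (K + 1 - #{m ∈ T | m < i}) #{j ∈ T | i < j ∧ ¬ LeftOf σ i j v} with h | h
  · exact (hσ.le_card_filter_invariant hv h (by omega)).trans (Nat.le_add_right _ _)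
  · exact (hσ.mirror.le_card_filter_invariant hv (by omega) (by omega)).trans
      (Nat.le_add_left _ _)

theorem Admissible.three_mul_choose_three_le_edgeWeight (hσ : Admissible σ) {K : ℕ}
    (hK : 2 * K < #S) : 3 * (K + 2).choose 3 ≤ edgeWeight σ S K := by
  induction S using Finset.induction_on_max generalizing K with
  | empty => simp at hK
  | insert v T hv ih =>
    obtain _ | K := K
    · simp
    rw [card_insert_of_notMem fun h => lt_irrefl v (hv v h)] at hK
    have hT := ih (K := K) (by omega)
    have hinv := hσ.choose_two_le_card_invariantEdges hv (K := K) (by omega)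
    have hlast := hσ.sum_tsub_leftCountOn_last hv (K := K + 1) (by omega)
    have hlast' := hσ.mirror.sum_tsub_leftCountOn_last hv (K := K + 1) (by omega)
    have hpascal : (K + 1 + 2).choose 3 = (K + 2).choose 2 + (K + 2).choose 3 :=
      Nat.choose_succ_succ' (K + 2) 2
    rw [edgeWeight_insert hv, hlast, hlast', hpascal]
    linarith

theorem Admissible.three_mul_choose_four_le_sum_edgeWeight (hσ : Admissible σ) {a : ℕ}
    (ha : 2 * a ≤ #S + 1) :
    3 * (a + 2).choose 4 ≤ ∑ K ∈ range a, edgeWeight σ S K := by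
  rw [← sum_range_add_two_choose_three, mul_sum]
  refine sum_le_sum fun K hK => hσ.three_mul_choose_three_le_edgeWeight ?_
  have := mem_range.1 hK
  omega

end EdgeWeight

section Separation

/-- The indicator of the edge `p` separating the endpoints of `q`, i.e. having one of them on its
left and the other one on its right, which is the left for `mirror σ`. -/
def separation (σ : Fin n → Fin n → Fin n → Bool) (p q : Fin n × Fin n) : ℕ :=
  (if LeftOf σ p.1 p.2 q.1 ∧ LeftOf (mirror σ) p.1 p.2 q.2 then 1 else 0) +
    if LeftOf σ p.1 p.2 q.2 ∧ LeftOf (mirror σ) p.1 p.2 q.1 then 1 else 0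

theorem leftCountOn_mul_leftCountOn_mirror (hij : i < j) :
    leftCountOn σ S i j * leftCountOn (mirror σ) S i j =
      ∑ q ∈ edgesOn S, separation σ (i, j) q := by
  have hprod : {m ∈ S | LeftOf σ i j m} ×ˢ {m ∈ S | LeftOf (mirror σ) i j m} =
      {q ∈ S.offDiag | LeftOf σ i j q.1 ∧ LeftOf (mirror σ) i j q.2} := by
    ext q
    simp only [mem_product, mem_filter, mem_offDiag, leftOf_mirror_iff hij]
    grind
  rw [leftCountOn, leftCountOn, ← card_product, hprod, card_filter,
    sum_offDiag_eq_sum_edgesOn fun x y => if LeftOf σ i j x ∧ LeftOf (mirror σ) i j y then 1 else 0]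
  rfl

theorem separation_eq_zero {p q : Fin n × Fin n} (hp : p.1 < p.2) (hpq : ¬ DisjointEdges p q) :
    separation σ p q = 0 := by
  simp only [separation, DisjointEdges, LeftOf] at hpq ⊢
  grind

/-- The number of unordered pairs of disjoint edges on `a < b < c < d` that cross an odd number of
times in a drawing with signature `σ`: the first term is for the pair `ac`, `bd`, the second one for
the pair `ad`, `bc`; the edges `ab` and `cd` never cross. -/
def oddPairs (σ : Fin n → Fin n → Fin n → Bool) (a b c d : Fin n) : ℕ :=
  (if σ a b c = σ b c d then 1 else 0) + if σ a b d = σ a c d then 0 else 1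

theorem Admissible.matchingSum_separation (hσ : Admissible σ) {a b c d : Fin n} (hab : a < b)
    (hbc : b < c) (hcd : c < d) :
    matchingSum (separation σ) a b c d + oddPairs σ a b c d = 3 := by
  have h := allowedForm_iff.1 (hσ a b c d hab hbc hcd)
  have hac := hab.trans hbc
  have hbd := hbc.trans hcd
  have had := hac.trans hcd
  simp only [matchingSum, separation, oddPairs, mirror, leftOf_iff_of_lt_left,
    leftOf_iff_of_between, leftOf_iff_of_right_lt, hab, hbc, hcd, hac, hbd, had]
  grind

theorem sum_leftCountOn_mul_add_sum_edgeWeight {a b : ℕ} (hba : b ≤ a) (hab : a ≤ b + 1)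
    (hS : #S = a + b + 1) :
    ∑ p ∈ edgesOn S, leftCountOn σ S p.1 p.2 * leftCountOn (mirror σ) S p.1 p.2 +
        ∑ K ∈ range a, edgeWeight σ S K + ∑ K ∈ range b, edgeWeight σ S K =
      (#S).choose 2 * (a.choose 2 + b.choose 2) := by
  simp only [edgeWeight]
  rw [sum_comm, sum_comm (s := range b), ← sum_add_distrib, ← sum_add_distrib, ← card_edgesOn,
    ← smul_eq_mul, ← sum_const]
  refine sum_congr rfl fun p hp => mul_add_sum_tsub hba hab ?_
  obtain ⟨h₁, h₂, hlt⟩ := mem_edgesOn.1 hp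
  have := leftCountOn_add_leftCountOn_mirror (σ := σ) h₁ h₂ hlt
  omega

theorem Admissible.sum_separation_add_le (hσ : Admissible σ) {a b : ℕ} (hba : b ≤ a)
    (hab : a ≤ b + 1) (hS : #S = a + b + 1) :
    ∑ p ∈ edgesOn S, ∑ q ∈ edgesOn S, separation σ p q + a.choose 2 * b.choose 2 ≤
      3 * (#S).choose 4 := by
  have hsep : ∑ p ∈ edgesOn S, ∑ q ∈ edgesOn S, separation σ p q =
      ∑ p ∈ edgesOn S, leftCountOn σ S p.1 p.2 * leftCountOn (mirror σ) S p.1 p.2 :=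
    sum_congr rfl fun p hp => (leftCountOn_mul_leftCountOn_mirror (mem_edgesOn.1 hp).2.2).symm
  have hsum := sum_leftCountOn_mul_add_sum_edgeWeight (σ := σ) hba hab hS
  have ha := hσ.three_mul_choose_four_le_sum_edgeWeight (S := S) (a := a) (by omega)
  have hb := hσ.three_mul_choose_four_le_sum_edgeWeight (S := S) (a := b) (by omega)
  have hchoose := choose_two_mul_choose_two_eq a b
  rw [← hS] at hchoose
  omega

end Separation

end Sig

section SignChange

open Filter Topology SignType

variable {g : ℝ → ℝ} {s u : ℝ}

theorem sign_eq_sign_of_forall_ne_zero (hsu : s ≤ u) (hg : ContinuousOn g (Set.Icc s u))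
    (h0 : ∀ t ∈ Set.Icc s u, g t ≠ 0) : sign (g s) = sign (g u) := by
  have hs := h0 s (Set.left_mem_Icc.2 hsu)
  have hu := h0 u (Set.right_mem_Icc.2 hsu)
  have himage : (0 : ℝ) ∉ g '' Set.Icc s u := fun ⟨t, ht, h⟩ => h0 t ht h
  rcases lt_or_gt_of_ne hs with hs | hs <;> rcases lt_or_gt_of_ne hu with hu | hu
  · rw [sign_neg hs, sign_neg hu]
  · exact absurd (intermediate_value_Icc hsu hg ⟨hs.le, hu.le⟩) himage
  · exact absurd (intermediate_value_Icc' hsu hg ⟨hu.le, hs.le⟩) himage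
  · rw [sign_pos hs, sign_pos hu]

theorem sign_eq_neg_sign_of_mul_neg {R : Type*} [Ring R] [LinearOrder R] [IsStrictOrderedRing R]
    {x y : R} (h : x * y < 0) : sign x = -sign y := by
  rcases mul_neg_iff.1 h with ⟨hx, hy⟩ | ⟨hx, hy⟩ <;> simp [sign_pos, sign_neg, hx, hy]

theorem sign_eq_neg_one_pow_card_mul_sign {Z : Finset ℝ} (hsu : s ≤ u)
    (hg : ContinuousOn g (Set.Icc s u)) (hs : g s ≠ 0) (hu : g u ≠ 0)
    (hZ : ∀ t, t ∈ Z ↔ t ∈ Set.Ioo s u ∧ g t = 0)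
    (hsign : ∀ t ∈ Z, ∀ᶠ p in 𝓝[<] t, ∀ᶠ q in 𝓝[>] t, g p * g q < 0) :
    sign (g s) = (-1) ^ #Z * sign (g u) := by
  induction Z using Finset.induction_on_min generalizing s with
  | empty =>
    rw [card_empty, pow_zero, one_mul]
    refine sign_eq_sign_of_forall_ne_zero hsu hg fun t ht h0 => notMem_empty t ((hZ t).2 ⟨?_, h0⟩)
    exact ⟨ht.1.lt_of_ne fun h => hs (h ▸ h0), ht.2.lt_of_ne fun h => hu (h ▸ h0)⟩
  | insert t Z ht ih =>
    obtain ⟨⟨hst, htu⟩, -⟩ := (hZ t).1 (mem_insert_self t Z)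
    obtain ⟨p, hp, hsp, hpt⟩ := ((hsign t (mem_insert_self t Z)).and (Ioo_mem_nhdsLT hst)).exists
    have hbefore : ∀ᶠ q in 𝓝[>] t, ∀ z ∈ Z, q < z :=
      (eventually_all_finset Z).2 fun z hz => nhdsWithin_le_nhds (Iio_mem_nhds (ht z hz))
    obtain ⟨q, ⟨hpq, hqZ⟩, htq, hqu⟩ := ((hp.and hbefore).and (Ioo_mem_nhdsGT htu)).exists
    have hsq : s ≤ q := (hst.trans htq).le
    have hsp_sign : sign (g s) = sign (g p) := by
      refine sign_eq_sign_of_forall_ne_zero hsp.le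
        (hg.mono (Set.Icc_subset_Icc_right (hpt.trans htu).le)) fun r hr h0 => ?_
      have hrt : r < t := hr.2.trans_lt hpt
      have hsr : s < r := hr.1.lt_of_ne fun h => hs (h ▸ h0)
      rcases mem_insert.1 ((hZ r).2 ⟨⟨hsr, hrt.trans htu⟩, h0⟩) with h | h
      · exact hrt.ne h
      · exact hrt.not_gt (ht r h)
    have hq := ih hqu.le (hg.mono (Set.Icc_subset_Icc_left hsq)) (right_ne_zero_of_mul hpq.ne)
      (fun r => by have := hZ r; grind) fun z hz => hsign z (mem_insert_of_mem hz)
    rw [hsp_sign, sign_eq_neg_sign_of_mul_neg hpq, hq,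
      card_insert_of_notMem fun h => lt_irrefl t (ht t h), pow_succ', neg_one_mul, neg_mul]

theorem even_card_iff_sign_eq_sign {Z : Finset ℝ} (hsu : s ≤ u)
    (hg : ContinuousOn g (Set.Icc s u)) (hs : g s ≠ 0) (hu : g u ≠ 0)
    (hZ : ∀ t, t ∈ Z ↔ t ∈ Set.Ioo s u ∧ g t = 0)
    (hsign : ∀ t ∈ Z, ∀ᶠ p in 𝓝[<] t, ∀ᶠ q in 𝓝[>] t, g p * g q < 0) :
    Even #Z ↔ sign (g s) = sign (g u) := by
  rw [sign_eq_neg_one_pow_card_mul_sign hsu hg hs hu hZ hsign]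
  rcases Nat.even_or_odd #Z with h | h
  · simp [h]
  · simpa [h.neg_one_pow, Nat.not_even_iff_odd.2 h, SignType.neg_eq_self_iff] using hu

theorem sign_add_of_sign_eq {M : Type*} [AddCommMonoid M] [LinearOrder M]
    [IsOrderedCancelAddMonoid M] {x y : M} (h : sign x = sign y) : sign (x + y) = sign x := by
  rcases lt_trichotomy x 0 with hx | rfl | hx
  · rw [sign_neg hx, eq_comm, sign_eq_neg_one_iff] at h
    rw [sign_neg hx, sign_neg (add_neg hx h)]
  · rw [zero_add, h]
  · rw [sign_pos hx, eq_comm, sign_eq_one_iff] at h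
    rw [sign_pos hx, sign_pos (add_pos hx h)]

end SignChange

namespace XMonotoneDrawing

open Filter Topology SignType

variable {n : ℕ} (D : XMonotoneDrawing n)

theorem crossCount_comm (i j k l : Fin n) : D.crossCount i j k l = D.crossCount k l i j := by
  simp only [crossCount, crossSet, max_comm (D.x i), min_comm (D.x j), eq_comm (a := D.e i j _)]

theorem eventually_sub_mul_sub_neg {i j k l : Fin n} (hij : i < j) (hkl : k < l)
    (hne : (i, j) ≠ (k, l)) {t : ℝ} (ht : t ∈ D.crossSet i j k l) :
    ∀ᶠ p in 𝓝[<] t, ∀ᶠ q in 𝓝[>] t, (D.e i j p - D.e k l p) * (D.e i j q - D.e k l q) < 0 := by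
  obtain ⟨hlt, hgt, heq⟩ := ht
  obtain ⟨ε, hε, h⟩ := D.sign_change i j k l hij hkl hne t hlt hgt heq
  filter_upwards [Ioo_mem_nhdsLT hlt, Ioo_mem_nhdsLT (sub_lt_self t hε)] with p hp hpε
  filter_upwards [Ioo_mem_nhdsGT hgt, Ioo_mem_nhdsGT (lt_add_of_pos_right t hε)] with q hq hqε
  exact h p hp.1 hpε.1 hp.2 q hq.2 hq.1 hqε.2

theorem even_crossCount_iff {i j k l : Fin n} (hij : i < j) (hkl : k < l)
    (hne : (i, j) ≠ (k, l)) {s u : ℝ} (hsu : s ≤ u) (hs : max (D.x i) (D.x k) ≤ s)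
    (hu : u ≤ min (D.x j) (D.x l)) (hcross : D.crossSet i j k l ⊆ Set.Ioo s u)
    (hs0 : D.e i j s - D.e k l s ≠ 0) (hu0 : D.e i j u - D.e k l u ≠ 0) :
    Even (D.crossCount i j k l) ↔
      sign (D.e i j s - D.e k l s) = sign (D.e i j u - D.e k l u) := by
  have hfin : (D.crossSet i j k l).Finite := D.cross_finite i j k l hij hkl hne
  obtain ⟨his, hks⟩ := max_le_iff.1 hs
  obtain ⟨huj, hul⟩ := le_min_iff.1 hu
  rw [crossCount, Set.ncard_eq_toFinset_card _ hfin]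
  refine even_card_iff_sign_eq_sign (g := fun t => D.e i j t - D.e k l t) hsu
    (((D.cont i j hij).mono (Set.Icc_subset_Icc his huj)).sub
      ((D.cont k l hkl).mono (Set.Icc_subset_Icc hks hul))) hs0 hu0 (fun t => ?_)
    fun t ht => D.eventually_sub_mul_sub_neg hij hkl hne (hfin.mem_toFinset.1 ht)
  rw [hfin.mem_toFinset]
  exact ⟨fun ht => ⟨hcross ht, sub_eq_zero.2 ht.2.2⟩, fun ht =>
    ⟨hs.trans_lt ht.1.1, ht.1.2.trans_le hu, sub_eq_zero.1 ht.2⟩⟩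

theorem crossCount_eq_zero_of_lt {b c : Fin n} (hbc : b < c) (a d : Fin n) :
    D.crossCount a b c d = 0 := by
  have hempty : D.crossSet a b c d = ∅ := Set.eq_empty_of_forall_notMem fun t ht =>
    (D.x_strictMono hbc).not_gt
      ((le_max_right _ _).trans_lt (ht.1.trans (ht.2.1.trans_le (min_le_left _ _))))
  rw [crossCount, hempty, Set.ncard_empty]

theorem sig_eq_sig_iff {i j k i' j' k' : Fin n} (hij : i < j) (hjk : j < k) (hij' : i' < j')
    (hjk' : j' < k') :
    D.sig i j k = D.sig i' j' k' ↔ sign (D.e i k (D.x j)) = sign (D.e i' k' (D.x j')) := by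
  rcases lt_or_gt_of_ne (D.avoid_vertex i j k hij hjk) with h | h <;>
    rcases lt_or_gt_of_ne (D.avoid_vertex i' j' k' hij' hjk') with h' | h' <;>
    simp [sig, sign_pos, sign_neg, h, h', h.not_gt, h'.not_gt]

theorem even_crossCount_nested {a b c d : Fin n} (hab : a < b) (hbc : b < c) (hcd : c < d) :
    Even (D.crossCount a d b c) ↔ D.sig a b d = D.sig a c d := by
  have hx := D.x_strictMono
  have hb := D.end_left b c hbc
  have hc := D.end_right b c hbc
  rw [D.sig_eq_sig_iff hab (hbc.trans hcd) (hab.trans hbc) hcd,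
    D.even_crossCount_iff (hab.trans (hbc.trans hcd)) hbc (by simp [hab.ne]) (hx hbc).le
      (max_le (hx hab).le le_rfl) (le_min (hx hcd).le le_rfl)
      (fun t ht => ⟨(max_lt_iff.1 ht.1).2, (lt_min_iff.1 ht.2.1).2⟩)
      (by simpa [hb] using D.avoid_vertex a b d hab (hbc.trans hcd))
      (by simpa [hc] using D.avoid_vertex a c d (hab.trans hbc) hcd), hb, hc, sub_zero, sub_zero]

theorem even_crossCount_interleaved {a b c d : Fin n} (hab : a < b) (hbc : b < c)
    (hcd : c < d) : Even (D.crossCount a c b d) ↔ D.sig a b c ≠ D.sig b c d := by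
  have hx := D.x_strictMono
  have hac := hab.trans hbc
  have hbd := hbc.trans hcd
  have hb := D.end_left b d hbd
  have hc := D.end_right a c hac
  have hb0 := D.avoid_vertex a b c hab hbc
  have hc0 := D.avoid_vertex b c d hbc hcd
  rw [ne_eq, D.sig_eq_sig_iff hab hbc hbc hcd,
    D.even_crossCount_iff hac hbd (by simp [hab.ne]) (hx hbc).le
      (max_le (hx hab).le le_rfl) (le_min le_rfl (hx hcd).le)
      (fun t ht => ⟨(max_lt_iff.1 ht.1).2, (lt_min_iff.1 ht.2.1).1⟩)
      (by simpa [hb] using hb0) (by simpa [hc] using hc0), hb, hc, sub_zero, zero_sub,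
    Left.sign_neg]
  rcases lt_or_gt_of_ne hb0 with h | h <;> rcases lt_or_gt_of_ne hc0 with h' | h' <;>
    simp [sign_pos, sign_neg, h, h']

variable {D}

namespace WeaklySemisimple

theorem eventually_sign_sub_nhdsGT (hD : D.WeaklySemisimple) {a b c : Fin n}
    (hab : a < b) (hbc : b < c) :
    ∀ᶠ s in 𝓝[>] D.x a, sign (D.e a c s - D.e a b s) = sign (D.e a c (D.x b)) := by
  have hx := D.x_strictMono
  have hac := hab.trans hbc
  have hne : (a, c) ≠ (a, b) := by simp [hbc.ne']
  have hb := D.end_right a b hab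
  have hfin : (D.crossSet a c a b).Finite := D.cross_finite a c a b hac hab hne
  have hcross : ∀ᶠ s in 𝓝[>] D.x a, ∀ t ∈ D.crossSet a c a b, s < t :=
    (eventually_all_finite hfin).2 fun t ht =>
      nhdsWithin_le_nhds (Iio_mem_nhds (max_lt_iff.1 ht.1).1)
  filter_upwards [hcross, Ioo_mem_nhdsGT (hx hab)] with s hcross ⟨has, hsb⟩
  have h := D.even_crossCount_iff hac hab hne hsb.le (max_le has.le has.le)
    (le_min (hx hbc).le le_rfl) (fun t ht => ⟨hcross t ht, (lt_min_iff.1 ht.2.1).2⟩)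
    (fun h0 => lt_irrefl s (hcross s ⟨max_lt has has, lt_min (hsb.trans (hx hbc)) hsb,
      sub_eq_zero.1 h0⟩))
    (by simpa [hb] using D.avoid_vertex a b c hab hbc)
  rw [hb, sub_zero] at h
  exact h.1 (hD a c a b hac hab hne (Or.inl rfl))

theorem eventually_sign_sub_nhdsLT (hD : D.WeaklySemisimple) {a b c : Fin n}
    (hab : a < b) (hbc : b < c) :
    ∀ᶠ s in 𝓝[<] D.x c, sign (D.e a c s - D.e b c s) = sign (D.e a c (D.x b)) := by
  have hx := D.x_strictMono
  have hac := hab.trans hbc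
  have hne : (a, c) ≠ (b, c) := by simp [hab.ne]
  have hb := D.end_left b c hbc
  have hfin : (D.crossSet a c b c).Finite := D.cross_finite a c b c hac hbc hne
  have hcross : ∀ᶠ s in 𝓝[<] D.x c, ∀ t ∈ D.crossSet a c b c, t < s :=
    (eventually_all_finite hfin).2 fun t ht =>
      nhdsWithin_le_nhds (Ioi_mem_nhds (lt_min_iff.1 ht.2.1).1)
  filter_upwards [hcross, Ioo_mem_nhdsLT (hx hbc)] with s hcross ⟨hbs, hsc⟩
  have h := D.even_crossCount_iff hac hbc hne hbs.le (max_le (hx hab).le le_rfl)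
    (le_min hsc.le hsc.le) (fun t ht => ⟨(max_lt_iff.1 ht.1).2, hcross t ht⟩)
    (by simpa [hb] using D.avoid_vertex a b c hab hbc)
    (fun h0 => lt_irrefl s (hcross s ⟨max_lt ((hx hab).trans hbs) hbs, lt_min hsc hsc,
      sub_eq_zero.1 h0⟩))
  rw [hb, sub_zero] at h
  exact (h.1 (hD a c b c hac hbc hne (Or.inr (Or.inr (Or.inr rfl))))).symm

theorem admissible (hD : D.WeaklySemisimple) : Sig.Admissible D.sig := by
  intro a b c d hab hbc hcd
  have hac := hab.trans hbc
  have hbd := hbc.trans hcd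
  obtain ⟨s, habc, hacd, habd⟩ := ((hD.eventually_sign_sub_nhdsGT hab hbc).and
    ((hD.eventually_sign_sub_nhdsGT hac hcd).and (hD.eventually_sign_sub_nhdsGT hab hbd))).exists
  obtain ⟨t, habd', hbcd', hacd'⟩ := ((hD.eventually_sign_sub_nhdsLT hab hbd).and
    ((hD.eventually_sign_sub_nhdsLT hbc hcd).and (hD.eventually_sign_sub_nhdsLT hac hcd))).exists
  rw [Sig.allowedForm_iff, D.sig_eq_sig_iff hab hbc hac hcd, D.sig_eq_sig_iff hab hbd hab hbc,
    D.sig_eq_sig_iff hab hbd hbc hcd, D.sig_eq_sig_iff hac hcd hab hbd]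
  constructor <;> intro h
  · rw [← habd, ← habc, ← sub_add_sub_cancel', sign_add_of_sign_eq]
    rw [habc, hacd, h]
  · rw [← hacd', ← habd', ← sub_add_sub_cancel, sign_add_of_sign_eq]
    rw [habd', hbcd', h]

end WeaklySemisimple

/-- The indicator of the edges `p` and `q` being distinct and crossing an odd number of times. -/
noncomputable def oddCross (D : XMonotoneDrawing n) (p q : Fin n × Fin n) : ℕ :=
  if p ≠ q ∧ Odd (D.crossCount p.1 p.2 q.1 q.2) then 1 else 0

theorem oddCross_comm (p q : Fin n × Fin n) : D.oddCross p q = D.oddCross q p := by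
  simp only [oddCross, D.crossCount_comm p.1, ne_comm (a := p)]

theorem oddCross_of_fst_ne {p q : Fin n × Fin n} (h : p.1 ≠ q.1) :
    D.oddCross p q = if Even (D.crossCount p.1 p.2 q.1 q.2) then 0 else 1 := by
  have hpq : p ≠ q := fun hpq => h (hpq ▸ rfl)
  simp only [oddCross, hpq, ne_eq, not_false_eq_true, true_and, ← Nat.not_even_iff_odd, ite_not]

theorem matchingSum_oddCross {a b c d : Fin n} (hab : a < b) (hbc : b < c) (hcd : c < d) :
    matchingSum D.oddCross a b c d = 2 * Sig.oddPairs D.sig a b c d := by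
  have hdisj : D.oddCross (a, b) (c, d) = 0 := by
    rw [oddCross_of_fst_ne (hab.trans hbc).ne, D.crossCount_eq_zero_of_lt hbc, if_pos Even.zero]
  have hinter : D.oddCross (a, c) (b, d) = if D.sig a b c = D.sig b c d then 1 else 0 := by
    simp only [oddCross_of_fst_ne (p := (a, c)) (q := (b, d)) hab.ne,
      D.even_crossCount_interleaved hab hbc hcd, ne_eq, ite_not]
  have hnest : D.oddCross (a, d) (b, c) = if D.sig a b d = D.sig a c d then 0 else 1 := by
    simp only [oddCross_of_fst_ne (p := (a, d)) (q := (b, c)) hab.ne,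
      D.even_crossCount_nested hab hbc hcd]
  rw [matchingSum, oddCross_comm (b, c), oddCross_comm (b, d), oddCross_comm (c, d), hdisj, hinter,
    hnest, Sig.oddPairs]
  ring

theorem ocr_eq_sum_oddCross (D : XMonotoneDrawing n) :
    D.ocr = (∑ p ∈ edgesOn univ, ∑ q ∈ edgesOn univ, D.oddCross p q) / 2 := by
  classical
  have hedges : edgesOn (univ : Finset (Fin n)) = univ.filter fun p => p.1 < p.2 := by
    simp [edgesOn]
  rw [ocr, Set.ncard_eq_toFinset_card', Set.toFinset_ofPred, card_filter, Fintype.sum_prod_type]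
  simp only [hedges, sum_filter, oddCross, ite_and, sum_ite_irrel, sum_const_zero]

theorem WeaklySemisimple.oddCross_eq_zero (hD : D.WeaklySemisimple) {p q : Fin n × Fin n}
    (hp : p.1 < p.2) (hq : q.1 < q.2) (hpq : ¬ DisjointEdges p q) : D.oddCross p q = 0 := by
  refine if_neg fun ⟨hne, hodd⟩ => Nat.not_even_iff_odd.2 hodd (hD _ _ _ _ hp hq hne ?_)
  simp only [DisjointEdges, Adj] at hpq ⊢
  tauto

theorem WeaklySemisimple.sum_two_mul_separation_add_oddCross (hD : D.WeaklySemisimple) :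
    ∑ p ∈ edgesOn univ, ∑ q ∈ edgesOn univ, (2 * Sig.separation D.sig p q + D.oddCross p q) =
      n.choose 4 * 6 := by
  have h := sum_edgesOn_sum_edgesOn_of_matchingSum (S := (univ : Finset (Fin n)))
    (F := fun p q => 2 * Sig.separation D.sig p q + D.oddCross p q) (C := 6)
    (fun p hp q hq hpq => ?_) fun a b c d hab hbc hcd => ?_
  · rwa [card_univ, Fintype.card_fin, smul_eq_mul] at h
  · rw [Sig.separation_eq_zero (mem_edgesOn.1 hp).2.2 hpq,
      hD.oddCross_eq_zero (mem_edgesOn.1 hp).2.2 (mem_edgesOn.1 hq).2.2 hpq, mul_zero, add_zero]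
  · have hsep := hD.admissible.matchingSum_separation hab hbc hcd
    have hodd := matchingSum_oddCross (D := D) hab hbc hcd
    simp only [matchingSum] at hsep hodd ⊢
    omega

end XMonotoneDrawing

/-- For every `n ≥ 1` and every weakly semisimple x-monotone drawing `D`
of `K n`, the number of unordered pairs of edges crossing an odd number of times is at
least `Z(n)`. -/
theorem weakly_semisimple_monotone_ocr_ge_Z (n : ℕ) (hn : 1 ≤ n)
    (D : XMonotoneDrawing n) (hD : D.WeaklySemisimple) :
    Zval n ≤ D.ocr := by
  have hsep := hD.admissible.sum_separation_add_le (S := univ) (a := n / 2) (b := (n - 1) / 2)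
    (by omega) (by omega) (by rw [card_univ, Fintype.card_fin]; omega)
  have hsum := hD.sum_two_mul_separation_add_oddCross
  simp only [sum_add_distrib, ← mul_sum] at hsum
  rw [card_univ, Fintype.card_fin, ← Zval_eq_choose_two_mul_choose_two] at hsep
  rw [D.ocr_eq_sum_oddCross]
  omega
end

section
/- For every n ≥ 1 there exists a simple x-monotone drawing of the complete graph K_n whose total number of crossings is exactly Z(n). -/
/-!
Put the vertices at `0, 1, …, n - 1` and draw the edge `{i, j}` as a parabolic arch above or below
the axis according to a sign `f (i + j)`. Two arches on the same side meet exactly when their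
endpoints interlace, so twice the number of crossings on an edge is a constant plus `f (i + j)`
times a sum of `f` over the index sums in a rectangle. Let `n = 2k + 2` and let `f` be the square
wave with `f (u + k + 1) = -f u`. Antiperiodicity folds the rectangles belonging to the edges at a
vertex `v` into `k × k` squares, and their total is invariant under translation, hence independent
of `v`: every vertex is responsible for exactly `k²(k - 1)/2` crossings. Each crossing involves four
vertices, so there are `(2k + 2)k²(k - 1)/8` crossings, and deleting the last vertex
removes `k²(k - 1)/2` of them and settles `2k + 1`.
-/

section PowerSums

lemma six_mul_sum_mul_sub {R : Type*} [CommRing R] (N : ℕ) :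
    6 * ∑ q ∈ Finset.range (N + 1), (q * (N - q) : R) = (N - 1) * N * (N + 1) := by
  have hpartial (j : ℕ) :
      6 * ∑ q ∈ Finset.range j, (q * (N - q) : R) = j * (j - 1) * (3 * N - (2 * j - 1)) := by
    induction j with
    | zero => simp
    | succ j ih => rw [Finset.sum_range_succ, mul_add, ih]; push_cast; ring
  rw [hpartial]
  push_cast
  ring

lemma three_mul_sum_abs_sub (k : ℕ) :
    3 * ∑ x ∈ Finset.range k, ∑ y ∈ Finset.range k, |(x : ℤ) - y| = k ^ 3 - k := by
  have hborder (k : ℕ) : 2 * ∑ x ∈ Finset.range k, |(x : ℤ) - k| = k * (k + 1) := by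
    have hreflect : ∑ x ∈ Finset.range k, |(x : ℤ) - k| =
        ∑ x ∈ Finset.range k, ((x : ℤ) + 1) := by
      rw [← Finset.sum_range_reflect]
      refine Finset.sum_congr rfl fun x hx => ?_
      rw [Finset.mem_range] at hx
      rw [abs_of_nonpos (by omega)]
      omega
    rw [hreflect]
    clear hreflect
    induction k with
    | zero => simp
    | succ k ih => rw [Finset.sum_range_succ, mul_add, ih]; push_cast; ring
  induction k with
  | zero => simp
  | succ k ih =>
    simp only [Finset.sum_range_succ, Finset.sum_add_distrib, sub_self, abs_zero, mul_add,
      abs_sub_comm (k : ℤ)]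
    push_cast
    linear_combination ih + 3 * hborder k

end PowerSums

section AntiperiodicSums

variable {R : Type*}

lemma sum_range_add_of_antiperiodic [AddCommGroup R] {g : ℕ → R} {m : ℕ}
    (hg : g.Antiperiodic m) (w t : ℕ) :
    ∑ u ∈ Finset.range m, g (w + t + u)
      = ∑ u ∈ Finset.range m, g (w + u) - 2 • ∑ u ∈ Finset.range t, g (w + u) := by
  have h := Finset.sum_range_add (fun u => g (w + u)) t m
  rw [add_comm t m, Finset.sum_range_add] at h
  have hneg (u : ℕ) : g (w + (m + u)) = -g (w + u) := by rw [← hg]; congr 1; ring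
  simp only [hneg, Finset.sum_neg_distrib] at h
  simp only [← add_assoc] at h
  rw [← sub_eq_add_neg, sub_eq_iff_eq_add'] at h
  rw [two_nsmul, h]
  abel

lemma sum_range_add_of_periodic [AddCommMonoid R] {g : ℕ → R} {m : ℕ}
    (hg : g.Periodic m) (w : ℕ) :
    ∑ u ∈ Finset.range m, g (w + u) = ∑ u ∈ Finset.range m, g u := by
  induction w with
  | zero => simp only [zero_add]
  | succ w ih =>
    rw [← ih]
    cases m with
    | zero => rfl
    | succ m =>
      rw [Finset.sum_range_succ, Finset.sum_range_succ', ← hg (w + 0)]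
      simp only [add_right_comm w 1, add_assoc, add_zero]

/-- The sum of `g` over the index sums of an `a × b` rectangle whose corner has index sum `w`. -/
def rectSum [AddCommMonoid R] (g : ℕ → R) (w a b : ℕ) : R :=
  ∑ x ∈ Finset.range a, ∑ y ∈ Finset.range b, g (w + x + y)

lemma rectSum_comm [AddCommMonoid R] (g : ℕ → R) (w a b : ℕ) :
    rectSum g w a b = rectSum g w b a := by
  rw [rectSum, Finset.sum_comm, rectSum]
  simp only [add_right_comm]

lemma rectSum_add_right [AddCommMonoid R] (g : ℕ → R) (w a b c : ℕ) :
    rectSum g w a (b + c) = rectSum g w a b + rectSum g (w + b) a c := by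
  simp only [rectSum, Finset.sum_range_add, Finset.sum_add_distrib, ← add_assoc,
    add_right_comm w _ b]

lemma rectSum_add_antiperiod [AddCommGroup R] {g : ℕ → R} {m : ℕ} (hg : g.Antiperiodic m)
    (w a b : ℕ) : rectSum g (w + m) a b = -rectSum g w a b := by
  simp only [rectSum, add_right_comm w m, add_right_comm _ m, hg _, Finset.sum_neg_distrib]

lemma rectSum_add_half [AddCommGroup R] {g : ℕ → R} {m : ℕ} (hg : g.Antiperiodic m)
    (w a b : ℕ) : rectSum g w a (b + m) = rectSum g w a m - rectSum g w a b := by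
  rw [add_comm b m, rectSum_add_right, rectSum_add_antiperiod hg, sub_eq_add_neg]

lemma rectSum_add_half_add_rectSum_add_half [AddCommGroup R] {g : ℕ → R} {m : ℕ}
    (hg : g.Antiperiodic m) (w a b : ℕ) :
    rectSum g w a (b + m) + rectSum g w (a + m) b = rectSum g w m (a + b) := by
  have hshift : rectSum g (w + b) a m = rectSum g w a m - 2 • rectSum g w a b := by
    simp only [rectSum, add_right_comm w b, sum_range_add_of_antiperiodic hg,
      Finset.sum_sub_distrib, Finset.sum_nsmul]
  rw [rectSum_comm g w (a + m), rectSum_add_half hg, rectSum_add_half hg, add_comm a b,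
    rectSum_add_right, rectSum_comm g (w + b), hshift, rectSum_comm g w b m, rectSum_comm g w b a]
  abel

lemma rectSum_succ_succ [AddCommMonoid R] (g : ℕ → R) (w n : ℕ) :
    rectSum g w (n + 1) (n + 1) = rectSum g w (n + 2) n + g (w + n) := by
  rw [rectSum_add_right g w (n + 1) n 1, rectSum_comm g w (n + 1) n, rectSum_comm g w (n + 2) n,
    rectSum_add_right g w n (n + 1) 1, add_assoc]
  congr 1
  simp only [rectSum, Finset.sum_range_one, add_zero]
  rw [Finset.sum_range_succ', add_zero]
  simp only [add_assoc, add_comm 1]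

/-- The summands for `q` and `q + k + 1` belong to rectangles which, by antiperiodicity, combine
to a square of side `k` and one extra cell. -/
lemma sum_mul_rectSum_eq_sum_mul_square [CommRing R] {g : ℕ → R} {k : ℕ}
    (hg : g.Antiperiodic (k + 1)) (hsq : ∀ u, g u * g u = 1) (w : ℕ) :
    ∑ q ∈ Finset.range (2 * k + 1), g (w + q) * rectSum g (w + q + 2) q (2 * k - q)
      = ∑ q ∈ Finset.range (k + 1), g (w + q) * rectSum g (w + q + 2) k k + k := by
  have hpair : ∀ q ∈ Finset.range k,
      g (w + q) * rectSum g (w + q + 2) q (2 * k - q)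
        + g (w + (k + 1 + q)) *
          rectSum g (w + (k + 1 + q) + 2) (k + 1 + q) (2 * k - (k + 1 + q))
      = g (w + q) * rectSum g (w + q + 2) k k + 1 := fun q hq => by
    obtain ⟨b, rfl⟩ := Nat.exists_eq_add_of_lt (Finset.mem_range.mp hq)
    have hcorner : g (w + q + 2 + (q + b)) = -g (w + q) := by
      rw [← hg]; congr 1; ring
    have hfold := rectSum_add_half_add_rectSum_add_half hg (w + q + 2) q b
    have hsquare := rectSum_succ_succ g (w + q + 2) (q + b)
    rw [hcorner, rectSum_comm g _ (q + b + 2)] at hsquare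
    rw [rectSum_comm g _ (q + b + 1 + 1)] at hfold
    rw [show w + (q + b + 1 + 1 + q) = w + q + (q + b + 1 + 1) by ring,
      show w + q + (q + b + 1 + 1) + 2 = w + q + 2 + (q + b + 1 + 1) by ring, hg,
      rectSum_add_antiperiod hg,
      show 2 * (q + b + 1) - q = b + (q + b + 1 + 1) by omega,
      show 2 * (q + b + 1) - (q + b + 1 + 1 + q) = b by omega, add_comm (q + b + 1 + 1) q]
    linear_combination g (w + q) * hfold - g (w + q) * hsquare + hsq (w + q)
  rw [show 2 * k + 1 = k + 1 + k by ring, Finset.sum_range_add, Finset.sum_range_succ,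
    add_right_comm, ← Finset.sum_add_distrib, Finset.sum_congr rfl hpair,
    Finset.sum_add_distrib, Finset.sum_range_succ, show 2 * k - k = k by omega]
  simp only [Finset.sum_const, Finset.card_range, nsmul_eq_mul, mul_one]
  ring

end AntiperiodicSums

section SquareWave

/-- The square wave of half-period `m`: `+1` on `[0, m)`, `-1` on `[m, 2m)`, and so on. -/
def squareWave (m u : ℕ) : ℤˣ := (-1) ^ (u / m)

lemma squareWave_antiperiodic {m : ℕ} (hm : 0 < m) : (squareWave m).Antiperiodic m := fun u => by
  rw [squareWave, Nat.add_div_right _ hm, pow_succ, mul_neg_one, squareWave]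

lemma squareWave_of_lt {m u : ℕ} (hu : u < m) : squareWave m u = 1 := by
  rw [squareWave, Nat.div_eq_of_lt hu, pow_zero]

lemma coe_antiperiodic {f : ℕ → ℤˣ} {m : ℕ} (hf : f.Antiperiodic m) :
    Function.Antiperiodic (fun u => (f u : ℤ)) m := fun u => by
  simp only [hf u, Units.val_neg]

lemma sum_squareWave_window {m t : ℕ} (ht : t ≤ m) :
    ∑ u ∈ Finset.range m, (squareWave m (t + u) : ℤ) = m - 2 * t := by
  have hone : ∀ j ≤ m, ∑ u ∈ Finset.range j, (squareWave m u : ℤ) = j := fun j hj => by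
    rw [Finset.sum_congr rfl fun u hu => by
      rw [squareWave_of_lt ((Finset.mem_range.mp hu).trans_le hj)]]
    simp
  obtain rfl | hm := m.eq_zero_or_pos
  · simp_all
  have h := sum_range_add_of_antiperiodic (coe_antiperiodic (squareWave_antiperiodic hm)) 0 t
  simpa only [zero_add, hone t ht, hone m le_rfl, nsmul_eq_mul, Nat.cast_ofNat] using h

lemma sum_squareWave_window_add_sub {m x y : ℕ} (hx : x ≤ m) (hy : y ≤ m) (hm : 0 < m) :
    ∑ u ∈ Finset.range m, (squareWave m (m + x - y + u) : ℤ) = 2 * |(x : ℤ) - y| - m := by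
  rcases le_total x y with h | h
  · rw [sum_squareWave_window (by omega), abs_of_nonpos (by omega)]
    omega
  · have hneg (u : ℕ) : squareWave m (m + x - y + u) = -squareWave m (x - y + u) := by
      rw [← squareWave_antiperiodic hm]; congr 1; omega
    simp only [hneg, Units.val_neg, Finset.sum_neg_distrib]
    rw [sum_squareWave_window (by omega), abs_of_nonneg (by omega)]
    omega

lemma sum_squareWave_mul_rectSum (k : ℕ) :
    ∑ u ∈ Finset.range (k + 1), (squareWave (k + 1) u : ℤ) *
        rectSum (fun u => (squareWave (k + 1) u : ℤ)) (u + 2) k k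
      = ∑ x ∈ Finset.range k, ∑ y ∈ Finset.range k, (2 * |(x : ℤ) - y| - (k + 1)) := by
  calc
    _ = ∑ u ∈ Finset.range (k + 1), ∑ x ∈ Finset.range k, ∑ y ∈ Finset.range k,
          (squareWave (k + 1) (k + 1 + x - y + u) : ℤ) := by
      refine Finset.sum_congr rfl fun u hu => ?_
      rw [squareWave_of_lt (Finset.mem_range.mp hu), Units.val_one, one_mul, rectSum]
      refine Finset.sum_congr rfl fun x _ => ?_
      rw [← Finset.sum_range_reflect]
      refine Finset.sum_congr rfl fun y hy => ?_
      rw [Finset.mem_range] at hy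
      congr 2
      omega
    _ = ∑ x ∈ Finset.range k, ∑ y ∈ Finset.range k, ∑ u ∈ Finset.range (k + 1),
          (squareWave (k + 1) (k + 1 + x - y + u) : ℤ) := by
      rw [Finset.sum_comm]
      exact Finset.sum_congr rfl fun x _ => Finset.sum_comm
    _ = _ := by
      refine Finset.sum_congr rfl fun x hx => Finset.sum_congr rfl fun y hy => ?_
      rw [Finset.mem_range] at hx hy
      rw [sum_squareWave_window_add_sub (by omega) (by omega) k.succ_pos, Nat.cast_succ]

end SquareWave

section Arches

/-- The parabolic arch over `[a, b]`: it vanishes at `a` and `b` and is positive in between. -/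
def arch (a b t : ℝ) : ℝ := (t - a) * (b - t)

lemma arch_pos {a b t : ℝ} (ha : a < t) (hb : t < b) : 0 < arch a b t :=
  mul_pos (sub_pos.mpr ha) (sub_pos.mpr hb)

/-- The pairs `(i, j)` and `(k, l)` interlace, with `i` the leftmost entry. -/
abbrev Interlaced {α : Type*} [LT α] (i j k l : α) : Prop := i < k ∧ k < j ∧ j < l

variable {a b c d t : ℝ} {σ τ : ℤˣ}

lemma arch_lt_arch_of_nested (hac : a < c) (hdb : d ≤ b) (hc : c < t) (hd : t < d) :
    arch c d t < arch a b t :=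
  mul_lt_mul (by linarith) (by linarith) (by linarith) (by linarith)

lemma arch_sub_arch_of_meet (h : arch a b t = arch c d t) (s : ℝ) :
    arch a b s - arch c d s = (a + b - (c + d)) * (s - t) := by
  unfold arch at *
  linear_combination h

/-- Positivity of the arches forces both of them onto the same page. -/
lemma sign_eq_and_arch_eq_of_meet (hl : max a c < t) (hr : t < min b d)
    (h : ((σ : ℤ) : ℝ) * arch a b t = ((τ : ℤ) : ℝ) * arch c d t) :
    σ = τ ∧ arch a b t = arch c d t := by
  rw [max_lt_iff] at hl
  rw [lt_min_iff] at hr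
  have hab := arch_pos hl.1 hr.1
  have hcd := arch_pos hl.2 hr.2
  obtain rfl | rfl := Int.units_eq_one_or σ <;> obtain rfl | rfl := Int.units_eq_one_or τ <;>
    push_cast at h <;> first | exact ⟨rfl, by linarith⟩ | linarith

lemma interlaced_of_arch_eq (hl : max a c < t) (hr : t < min b d) (hne : (a, b) ≠ (c, d))
    (h : arch a b t = arch c d t) : Interlaced a b c d ∨ Interlaced c d a b := by
  rw [max_lt_iff] at hl
  rw [lt_min_iff] at hr
  rcases lt_trichotomy a c with hac | rfl | hac
  · exact .inl ⟨hac, hl.2.trans hr.1, lt_of_not_ge fun hdb =>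
      (arch_lt_arch_of_nested hac hdb hl.2 hr.2).ne' h⟩
  · have hbd : b = d := by simpa [arch, sub_ne_zero.mpr hl.1.ne'] using h
    exact absurd (congrArg (Prod.mk a) hbd) hne
  · exact .inr ⟨hac, hl.1.trans hr.2, lt_of_not_ge fun hbd =>
      (arch_lt_arch_of_nested hac hbd hl.1 hr.1).ne h⟩

lemma Interlaced.sum_lt (h : Interlaced a b c d) : a + b < c + d :=
  add_lt_add h.1 h.2.2

lemma Interlaced.exists_arch_eq (h : Interlaced a b c d) :
    ∃ t ∈ Set.Ioo c b, arch a b t = arch c d t := by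
  obtain ⟨hac, hcb, hbd⟩ := h
  have hcont : ContinuousOn (fun t => arch a b t - arch c d t) (Set.Icc c b) := by
    unfold arch
    fun_prop
  have hc : 0 < arch a b c - arch c d c := by
    simpa [arch] using arch_pos hac hcb
  have hb : arch a b b - arch c d b < 0 := by
    simpa [arch] using arch_pos hcb hbd
  obtain ⟨t, ht, h0⟩ := intermediate_value_Ioo' hcb.le hcont ⟨hb, hc⟩
  exact ⟨t, ht, sub_eq_zero.mp h0⟩

lemma exists_signed_arch_sub_eq_mul (hl : max a c < t) (hr : t < min b d)
    (hne : (a, b) ≠ (c, d))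
    (h : ((σ : ℤ) : ℝ) * arch a b t = ((τ : ℤ) : ℝ) * arch c d t) :
    ∃ K : ℝ, K ≠ 0 ∧ ∀ s,
      ((σ : ℤ) : ℝ) * arch a b s - ((τ : ℤ) : ℝ) * arch c d s = K * (s - t) := by
  obtain ⟨rfl, heq⟩ := sign_eq_and_arch_eq_of_meet hl hr h
  refine ⟨((σ : ℤ) : ℝ) * (a + b - (c + d)), mul_ne_zero (by simp) (sub_ne_zero.mpr ?_),
    fun s => by rw [← mul_sub, arch_sub_arch_of_meet heq, mul_assoc]⟩
  exact (interlaced_of_arch_eq hl hr hne heq).elim (fun hi => hi.sum_lt.ne)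
    fun hi => hi.sum_lt.ne'

lemma exists_signed_arch_meet_iff (hne : (a, b) ≠ (c, d)) :
    (∃ t, max a c < t ∧ t < min b d ∧
        ((σ : ℤ) : ℝ) * arch a b t = ((τ : ℤ) : ℝ) * arch c d t)
      ↔ (Interlaced a b c d ∨ Interlaced c d a b) ∧ σ = τ := by
  constructor
  · rintro ⟨t, hl, hr, h⟩
    obtain ⟨hστ, heq⟩ := sign_eq_and_arch_eq_of_meet hl hr h
    exact ⟨interlaced_of_arch_eq hl hr hne heq, hστ⟩
  · rintro ⟨hi | hi, rfl⟩ <;> obtain ⟨t, ⟨hl, hr⟩, heq⟩ := hi.exists_arch_eq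
    · exact ⟨t, max_lt (hi.1.trans hl) hl, lt_min hr (hr.trans hi.2.2), by rw [heq]⟩
    · exact ⟨t, max_lt hl (hi.1.trans hl), lt_min (hr.trans hi.2.2) hr, by rw [heq]⟩

lemma subsingleton_signed_arch_meet (hne : (a, b) ≠ (c, d)) :
    {t | max a c < t ∧ t < min b d ∧
      ((σ : ℤ) : ℝ) * arch a b t = ((τ : ℤ) : ℝ) * arch c d t}.Subsingleton := by
  rintro s ⟨_, _, hs⟩ t ⟨hl, hr, ht⟩
  obtain ⟨K, hK, hdiff⟩ := exists_signed_arch_sub_eq_mul hl hr hne ht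
  have h0 := hdiff s
  rw [hs, sub_self, eq_comm, mul_eq_zero, sub_eq_zero] at h0
  exact h0.resolve_left hK

end Arches

section TwoPage

variable {n : ℕ}

lemma natCast_pair_ne {i j k l : Fin n} (hne : (i, j) ≠ (k, l)) :
    ((((i : ℕ) : ℝ), ((j : ℕ) : ℝ)) : ℝ × ℝ) ≠ (((k : ℕ) : ℝ), ((l : ℕ) : ℝ)) := fun h =>
  hne (by simpa [Fin.ext_iff] using h)

/-- The two-page drawing with vertices `0, 1, …, n - 1` in which the edge `{i, j}` is a parabolic
arch above the axis if `σ i j = 1` and below it if `σ i j = -1`. -/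
noncomputable def twoPageDrawing (σ : ℕ → ℕ → ℤˣ) (n : ℕ) : XMonotoneDrawing n where
  x i := (i : ℕ)
  x_strictMono := fun _ _ hij => Nat.cast_lt.mpr hij
  e i j t := ((σ i j : ℤ) : ℝ) * arch (i : ℕ) (j : ℕ) t
  cont _ _ _ := by unfold arch; fun_prop
  end_left _ _ _ := by simp [arch]
  end_right _ _ _ := by simp [arch]
  avoid_vertex _ _ _ him hmj :=
    mul_ne_zero (by simp) (arch_pos (Nat.cast_lt.mpr him) (Nat.cast_lt.mpr hmj)).ne'
  cross_finite _ _ _ _ _ _ hne := (subsingleton_signed_arch_meet (natCast_pair_ne hne)).finite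
  sign_change _ _ _ _ _ _ hne t hl hr h := by
    obtain ⟨K, hK, hdiff⟩ := exists_signed_arch_sub_eq_mul hl hr (natCast_pair_ne hne) h
    refine ⟨1, one_pos, fun s _ _ hst u _ htu _ => ?_⟩
    rw [hdiff, hdiff, mul_mul_mul_comm]
    exact mul_neg_of_pos_of_neg (mul_self_pos.mpr hK)
      (mul_neg_of_neg_of_pos (sub_neg.mpr hst) (sub_pos.mpr htu))

lemma crossCount_twoPageDrawing (σ : ℕ → ℕ → ℤˣ) {i j k l : Fin n} (hne : (i, j) ≠ (k, l)) :
    (twoPageDrawing σ n).crossCount i j k l =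
      if (Interlaced i j k l ∨ Interlaced k l i j) ∧ σ i j = σ k l then 1 else 0 := by
  have hsub : ((twoPageDrawing σ n).crossSet i j k l).Subsingleton :=
    subsingleton_signed_arch_meet (natCast_pair_ne hne)
  have hiff : ((twoPageDrawing σ n).crossSet i j k l).Nonempty ↔
      (Interlaced i j k l ∨ Interlaced k l i j) ∧ σ i j = σ k l := by
    refine (exists_signed_arch_meet_iff (natCast_pair_ne hne)).trans ?_
    simp only [Interlaced, Nat.cast_lt, Fin.lt_def]
  rw [XMonotoneDrawing.crossCount]
  split_ifs with h
  · obtain ⟨t, ht⟩ := hiff.mpr h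
    rw [hsub.eq_singleton_of_mem ht, Set.ncard_singleton]
  · rw [Set.not_nonempty_iff_eq_empty.mp (mt hiff.mp h), Set.ncard_empty]

lemma simple_twoPageDrawing (σ : ℕ → ℕ → ℤˣ) (n : ℕ) : (twoPageDrawing σ n).Simple := by
  intro i j k l _ _ hne
  rw [crossCount_twoPageDrawing σ hne]
  refine ⟨fun hadj => if_neg ?_, fun _ => by split_ifs <;> simp⟩
  unfold XMonotoneDrawing.Adj at hadj
  omega

end TwoPage

section Counting

/-- The indicator that the edges `{i, j}` and `{k, l}` cross in `twoPageDrawing σ` with `i` the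
leftmost of the four vertices. -/
def crossIndicator (σ : ℕ → ℕ → ℤˣ) (i j k l : ℕ) : ℕ :=
  if Interlaced i j k l ∧ σ i j = σ k l then 1 else 0

/-- The number of crossings of `twoPageDrawing σ n`. -/
def crossings (σ : ℕ → ℕ → ℤˣ) (n : ℕ) : ℕ :=
  ∑ i ∈ Finset.range n, ∑ j ∈ Finset.range n, ∑ k ∈ Finset.range n, ∑ l ∈ Finset.range n,
    crossIndicator σ i j k l

/-- The number of crossings on the edge `{i, j}`, for `i < j`, of `twoPageDrawing σ n`. -/
def edgeCrossings (σ : ℕ → ℕ → ℤˣ) (n i j : ℕ) : ℕ :=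
  ∑ k ∈ Finset.range n, ∑ l ∈ Finset.range n,
    (crossIndicator σ i j k l + crossIndicator σ k l i j)

/-- The number of crossings on the edges at the vertex `v` of `twoPageDrawing σ n`. -/
def vertexCrossings (σ : ℕ → ℕ → ℤˣ) (n v : ℕ) : ℕ :=
  ∑ i ∈ Finset.range n, (edgeCrossings σ n i v + edgeCrossings σ n v i)

variable (σ : ℕ → ℕ → ℤˣ) (n : ℕ)

lemma cr_twoPageDrawing : (twoPageDrawing σ n).cr = crossings σ n := by
  have hterm (p : (Fin n × Fin n) × (Fin n × Fin n)) :
      (if p.1.1 < p.1.2 ∧ p.2.1 < p.2.2 ∧ p.1 ≠ p.2 then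
        (twoPageDrawing σ n).crossCount p.1.1 p.1.2 p.2.1 p.2.2 else 0)
      = crossIndicator σ p.1.1 p.1.2 p.2.1 p.2.2 + crossIndicator σ p.2.1 p.2.2 p.1.1 p.1.2 := by
    obtain ⟨⟨i, j⟩, k, l⟩ := p
    unfold crossIndicator
    by_cases hne : (i, j) = (k, l)
    · obtain ⟨rfl, rfl⟩ := Prod.mk.inj hne
      simp only [ne_eq, not_true_eq_false, and_false, if_false]
      rw [if_neg (by omega)]
    · rw [crossCount_twoPageDrawing σ hne]
      simp only [Interlaced, Fin.lt_def, ne_eq, hne, not_false_eq_true]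
      grind
  have hsum : ∑ p : (Fin n × Fin n) × (Fin n × Fin n),
      crossIndicator σ p.1.1 p.1.2 p.2.1 p.2.2 = crossings σ n := by
    simp only [Fintype.sum_prod_type, crossings, Finset.sum_range]
  have hswap : ∑ p : (Fin n × Fin n) × (Fin n × Fin n),
      crossIndicator σ p.2.1 p.2.2 p.1.1 p.1.2 = crossings σ n :=
    (Equiv.sum_comp (Equiv.prodComm _ _)
      fun p : (Fin n × Fin n) × (Fin n × Fin n) =>
        crossIndicator σ p.1.1 p.1.2 p.2.1 p.2.2).trans hsum
  rw [XMonotoneDrawing.cr, Finset.sum_congr rfl fun p _ => hterm p, Finset.sum_add_distrib, hsum,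
    hswap]
  omega

lemma sum_edgeCrossings :
    ∑ i ∈ Finset.range n, ∑ j ∈ Finset.range n, edgeCrossings σ n i j = 2 * crossings σ n := by
  simp only [edgeCrossings, Finset.sum_add_distrib, two_mul]
  congr 1
  calc
    _ = ∑ i ∈ Finset.range n, ∑ k ∈ Finset.range n, ∑ j ∈ Finset.range n, ∑ l ∈ Finset.range n,
          crossIndicator σ k l i j := Finset.sum_congr rfl fun i _ => Finset.sum_comm
    _ = ∑ k ∈ Finset.range n, ∑ i ∈ Finset.range n, ∑ l ∈ Finset.range n, ∑ j ∈ Finset.range n,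
          crossIndicator σ k l i j := Finset.sum_comm.trans
      (Finset.sum_congr rfl fun k _ => Finset.sum_congr rfl fun i _ => Finset.sum_comm)
    _ = _ := Finset.sum_congr rfl fun k _ => Finset.sum_comm

lemma sum_vertexCrossings :
    ∑ v ∈ Finset.range n, vertexCrossings σ n v = 4 * crossings σ n := by
  simp only [vertexCrossings, Finset.sum_add_distrib]
  rw [Finset.sum_comm, sum_edgeCrossings]
  ring

variable {σ n}

lemma crossIndicator_eq_zero {i j k l : ℕ} (h : ¬ Interlaced i j k l) :
    crossIndicator σ i j k l = 0 :=
  if_neg fun hc => h hc.1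

lemma edgeCrossings_eq_zero {i j : ℕ} (h : j ≤ i) : edgeCrossings σ n i j = 0 :=
  Finset.sum_eq_zero fun k _ => Finset.sum_eq_zero fun l _ => by
    rw [crossIndicator_eq_zero (by omega), crossIndicator_eq_zero (by omega), add_zero]

lemma vertexCrossings_eq_sum_add_sum (v t : ℕ) :
    vertexCrossings σ (v + t + 1) v =
      ∑ i ∈ Finset.range v, edgeCrossings σ (v + t + 1) i v +
        ∑ q ∈ Finset.range t, edgeCrossings σ (v + t + 1) v (v + q + 1) := by
  have hsplit (F : ℕ → ℕ) : ∑ i ∈ Finset.range (v + t + 1), F i =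
      ∑ i ∈ Finset.range v, F i + (∑ q ∈ Finset.range t, F (v + q + 1) + F v) := by
    rw [add_assoc, Finset.sum_range_add, Finset.sum_range_succ' (fun x => F (v + x))]
    rfl
  rw [vertexCrossings, hsplit, edgeCrossings_eq_zero le_rfl, add_zero, add_zero]
  congr 1
  · refine Finset.sum_congr rfl fun i hi => ?_
    rw [edgeCrossings_eq_zero (Finset.mem_range.mp hi).le, add_zero]
  · refine Finset.sum_congr rfl fun q _ => ?_
    rw [edgeCrossings_eq_zero (by omega : v ≤ v + q + 1), zero_add]

lemma vertexCrossings_last : vertexCrossings σ (n + 1) n =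
    ∑ i ∈ Finset.range (n + 1), ∑ j ∈ Finset.range (n + 1), ∑ k ∈ Finset.range (n + 1),
      crossIndicator σ i j k n := by
  calc
    _ = ∑ k ∈ Finset.range (n + 1), ∑ i ∈ Finset.range (n + 1), ∑ j ∈ Finset.range (n + 1),
          crossIndicator σ i j k n := by
      refine Finset.sum_congr rfl fun k hk => ?_
      rw [edgeCrossings_eq_zero (Finset.mem_range_succ_iff.mp hk), add_zero, edgeCrossings]
      refine Finset.sum_congr rfl fun i _ => Finset.sum_congr rfl fun j hj => ?_
      rw [Finset.mem_range] at hj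
      rw [crossIndicator_eq_zero (by omega), zero_add]
    _ = _ := by
      rw [Finset.sum_comm]
      exact Finset.sum_congr rfl fun i _ => Finset.sum_comm

lemma crossings_succ : crossings σ (n + 1) = crossings σ n + vertexCrossings σ (n + 1) n := by
  have hold {i j k : ℕ} (h : n ≤ i ∨ n ≤ j ∨ n ≤ k) :
      ∀ l ∈ Finset.range n, crossIndicator σ i j k l = 0 := fun l hl => by
    rw [Finset.mem_range] at hl
    exact crossIndicator_eq_zero (by omega)
  rw [vertexCrossings_last]
  simp only [crossings, Finset.sum_range_succ _ n, Finset.sum_add_distrib]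
  simp only [Finset.sum_eq_zero (hold (.inl le_rfl)),
    Finset.sum_eq_zero (hold (.inr (.inl le_rfl))),
    Finset.sum_eq_zero (hold (.inr (.inr le_rfl))), Finset.sum_const_zero]
  ring

end Counting

section Diagonal

/-- The page assignment `f (i + j)`, constant along the antidiagonals. -/
def diagonalPages (f : ℕ → ℤˣ) (i j : ℕ) : ℤˣ := f (i + j)

variable {f : ℕ → ℤˣ}

lemma sum_crossIndicator_of_between (σ : ℕ → ℕ → ℤˣ) {i q k : ℕ} (r : ℕ) (hik : i < k)
    (hkj : k < i + q + 1) :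
    ∑ l ∈ Finset.range (i + q + r + 2),
      (crossIndicator σ i (i + q + 1) k l + crossIndicator σ l k i (i + q + 1)) =
    (∑ l ∈ Finset.range i, if σ l k = σ i (i + q + 1) then 1 else 0) +
      ∑ y ∈ Finset.range r, if σ i (i + q + 1) = σ k (i + q + 2 + y) then 1 else 0 := by
  have hleft : ∀ l ∈ Finset.range i,
      crossIndicator σ i (i + q + 1) k l + crossIndicator σ l k i (i + q + 1) =
        if σ l k = σ i (i + q + 1) then 1 else 0 := fun l hl => by
    rw [Finset.mem_range] at hl
    rw [crossIndicator_eq_zero (by omega : ¬ Interlaced i (i + q + 1) k l), zero_add,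
      crossIndicator]
    simp only [Interlaced, hl, hik, hkj, true_and]
  have hmid : ∀ x ∈ Finset.range (q + 2),
      crossIndicator σ i (i + q + 1) k (i + x) + crossIndicator σ (i + x) k i (i + q + 1) = 0 :=
    fun x hx => by
      rw [Finset.mem_range] at hx
      rw [crossIndicator_eq_zero (by omega), crossIndicator_eq_zero (by omega), add_zero]
  have hright (y : ℕ) :
      crossIndicator σ i (i + q + 1) k (i + (q + 2) + y) +
          crossIndicator σ (i + (q + 2) + y) k i (i + q + 1) =
        if σ i (i + q + 1) = σ k (i + q + 2 + y) then 1 else 0 := by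
    rw [crossIndicator_eq_zero (by omega : ¬ Interlaced (i + (q + 2) + y) k i (i + q + 1)),
      add_zero, crossIndicator, ← add_assoc]
    simp only [Interlaced, hik, hkj, true_and, show i + q + 1 < i + q + 2 + y by omega]
  rw [show i + q + r + 2 = i + (q + 2) + r by ring, Finset.sum_range_add, Finset.sum_range_add,
    Finset.sum_congr rfl hleft, Finset.sum_eq_zero hmid, Finset.sum_congr rfl fun y _ => hright y,
    add_zero]

lemma edgeCrossings_eq_sum (σ : ℕ → ℕ → ℤˣ) (i q r : ℕ) :
    edgeCrossings σ (i + q + r + 2) i (i + q + 1) =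
      ∑ x ∈ Finset.range q,
        ((∑ l ∈ Finset.range i, if σ l (i + 1 + x) = σ i (i + q + 1) then 1 else 0) +
          ∑ y ∈ Finset.range r,
            if σ i (i + q + 1) = σ (i + 1 + x) (i + q + 2 + y) then 1 else 0) := by
  have houter {k : ℕ} (hk : k < i + 1 ∨ i + q + 1 ≤ k) : ∑ l ∈ Finset.range (i + q + r + 2),
      (crossIndicator σ i (i + q + 1) k l + crossIndicator σ l k i (i + q + 1)) = 0 :=
    Finset.sum_eq_zero fun l _ => by
      rw [crossIndicator_eq_zero (by omega), crossIndicator_eq_zero (by omega), add_zero]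
  have hsplit (F : ℕ → ℕ) : ∑ k ∈ Finset.range (i + q + r + 2), F k =
      ∑ k ∈ Finset.range (i + 1), F k + ∑ x ∈ Finset.range q, F (i + 1 + x) +
        ∑ y ∈ Finset.range (r + 1), F (i + 1 + q + y) := by
    rw [show i + q + r + 2 = i + 1 + q + (r + 1) by ring, Finset.sum_range_add,
      Finset.sum_range_add]
  rw [edgeCrossings]
  simp only [Finset.sum_add_distrib]
  rw [Finset.sum_comm (f := fun k l => crossIndicator σ k l i (i + q + 1))]
  simp only [← Finset.sum_add_distrib]
  rw [hsplit, Finset.sum_eq_zero fun k hk => houter (.inl (Finset.mem_range.mp hk)),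
    Finset.sum_eq_zero fun y _ => houter (k := i + 1 + q + y) (.inr (by omega)), zero_add, add_zero]
  refine Finset.sum_congr rfl fun x hx => ?_
  rw [Finset.mem_range] at hx
  exact sum_crossIndicator_of_between σ r (by omega) (by omega)

lemma two_mul_ite_units_eq (σ τ : ℤˣ) :
    2 * (if σ = τ then 1 else 0 : ℤ) = 1 + σ * τ := by
  revert σ τ
  decide

/-- Twice the number of crossings on an edge of `K (N + 2)` whose end vertices have index sum `u`
and `q` vertices between them, when pages are assigned by a `g` of period `N + 2` along the
antidiagonals. -/
def diagonalEdgeTerm (g : ℕ → ℤ) (N u q : ℕ) : ℤ :=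
  q * (N - q) + g u * rectSum g (u + 2) q (N - q)

lemma diagonalEdgeTerm_add_period {g : ℕ → ℤ} {N q : ℕ} (hg : g.Periodic (N + 2)) (u : ℕ)
    (hq : q ≤ N) : diagonalEdgeTerm g N (u + (N + 2)) (N - q) = diagonalEdgeTerm g N u q := by
  have hrect : rectSum g (u + (N + 2) + 2) (N - q) q = rectSum g (u + 2) q (N - q) := by
    rw [rectSum_comm]
    refine Finset.sum_congr rfl fun x _ => Finset.sum_congr rfl fun y _ => ?_
    rw [← hg (u + 2 + x + y)]
    congr 1
    ring
  rw [diagonalEdgeTerm, Nat.sub_sub_self hq, hg, hrect, diagonalEdgeTerm, Nat.cast_sub hq]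
  ring

lemma two_mul_edgeCrossings_diagonalPages {N i q : ℕ} (hf : f.Periodic (N + 2)) (h : i + q ≤ N) :
    2 * (edgeCrossings (diagonalPages f) (N + 2) i (i + q + 1) : ℤ) =
      diagonalEdgeTerm (fun u => (f u : ℤ)) N (2 * i + 1 + q) q := by
  obtain ⟨r, rfl⟩ := Nat.exists_eq_add_of_le h
  have hedge : i + (i + q + 1) = 2 * i + 1 + q := by ring
  have hright (x y : ℕ) : i + 1 + x + (i + q + 2 + y) = 2 * i + 1 + q + 2 + x + y := by ring
  have hleft (x l : ℕ) : f (l + (i + 1 + x)) = f (2 * i + 1 + q + 2 + r + x + l) := by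
    rw [← hf]; congr 1; ring
  rw [edgeCrossings_eq_sum, diagonalEdgeTerm, show i + q + r - q = r + i by omega,
    rectSum_add_right]
  push_cast
  simp only [diagonalPages, hright, hleft, hedge, rectSum, mul_add, Finset.sum_add_distrib,
    Finset.mul_sum, two_mul_ite_units_eq, Finset.sum_const, Finset.card_range, nsmul_eq_mul]
  simp only [mul_one, mul_comm (f (2 * i + 1 + q) : ℤ)]
  ring

lemma two_mul_vertexCrossings_diagonalPages {N v : ℕ} (hf : f.Periodic (N + 2)) (hv : v < N + 2) :
    2 * (vertexCrossings (diagonalPages f) (N + 2) v : ℤ) =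
      ∑ q ∈ Finset.range (N + 1),
        diagonalEdgeTerm (fun u => (f u : ℤ)) N (2 * v + 1 + q) q := by
  obtain ⟨t, ht⟩ := Nat.exists_eq_add_of_le (Nat.lt_succ_iff.mp hv)
  have hg : Function.Periodic (fun u => (f u : ℤ)) (N + 2) := hf.comp _
  have hbefore : ∀ i ∈ Finset.range v,
      2 * (edgeCrossings (diagonalPages f) (N + 2) i v : ℤ) =
        diagonalEdgeTerm (fun u => (f u : ℤ)) N (2 * v + 1 + (t + i)) (t + i) := fun i hi => by
    obtain ⟨q, rfl⟩ := Nat.exists_eq_add_of_lt (Finset.mem_range.mp hi)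
    rw [two_mul_edgeCrossings_diagonalPages hf (by omega),
      ← diagonalEdgeTerm_add_period hg _ (by omega)]
    congr 1 <;> omega
  have hafter : ∀ q ∈ Finset.range t,
      2 * (edgeCrossings (diagonalPages f) (N + 2) v (v + q + 1) : ℤ) =
        diagonalEdgeTerm (fun u => (f u : ℤ)) N (2 * v + 1 + q) q := fun q hq => by
    rw [Finset.mem_range] at hq
    exact two_mul_edgeCrossings_diagonalPages hf (by omega)
  have hsum := vertexCrossings_eq_sum_add_sum (σ := diagonalPages f) v t
  rw [← ht] at hsum
  rw [hsum, show Finset.range (N + 1) = .range (t + v) by rw [ht, add_comm], Finset.sum_range_add,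
    ← Finset.sum_congr rfl hbefore, ← Finset.sum_congr rfl hafter]
  push_cast
  rw [mul_add, Finset.mul_sum, Finset.mul_sum, add_comm]

lemma sum_diagonalEdgeTerm_squareWave (k w : ℕ) :
    ∑ q ∈ Finset.range (2 * k + 1),
        diagonalEdgeTerm (fun u => (squareWave (k + 1) u : ℤ)) (2 * k) (w + q) q
      = k ^ 2 * (k - 1) := by
  set g : ℕ → ℤ := fun u => (squareWave (k + 1) u : ℤ) with hg_def
  have hg : g.Antiperiodic (k + 1) := coe_antiperiodic (squareWave_antiperiodic k.succ_pos)
  have hsq (u : ℕ) : g u * g u = 1 := by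
    rw [hg_def, ← Units.val_mul, Int.units_mul_self, Units.val_one]
  have hperiodic : Function.Periodic (fun u => g u * rectSum g (u + 2) k k) (k + 1) := fun u => by
    simp only [hg u, add_right_comm u _ 2, rectSum_add_antiperiod hg, neg_mul_neg]
  have hshift := sum_range_add_of_periodic hperiodic w
  have hprod := six_mul_sum_mul_sub (R := ℤ) (2 * k)
  have habs := three_mul_sum_abs_sub k
  simp only [diagonalEdgeTerm, Finset.sum_add_distrib]
  rw [sum_mul_rectSum_eq_sum_mul_square hg hsq, hshift, sum_squareWave_mul_rectSum]
  simp only [Finset.sum_sub_distrib, ← Finset.mul_sum, Finset.sum_const, Finset.card_range,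
    nsmul_eq_mul]
  push_cast at hprod ⊢
  linarith

lemma two_mul_vertexCrossings_squareWave {k v : ℕ} (hv : v < 2 * k + 2) :
    2 * (vertexCrossings (diagonalPages (squareWave (k + 1))) (2 * k + 2) v : ℤ)
      = k ^ 2 * (k - 1) := by
  have hperiodic : (squareWave (k + 1)).Periodic (2 * k + 2) :=
    (squareWave_antiperiodic k.succ_pos).periodic_two_mul
  rw [two_mul_vertexCrossings_diagonalPages hperiodic hv, sum_diagonalEdgeTerm_squareWave]

lemma four_mul_crossings_even (k : ℕ) :
    4 * (crossings (diagonalPages (squareWave (k + 1))) (2 * k + 2) : ℤ)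
      = (k + 1) * k * k * (k - 1) := by
  have hsum := sum_vertexCrossings (diagonalPages (squareWave (k + 1))) (2 * k + 2)
  have htwice : 2 * (4 * (crossings (diagonalPages (squareWave (k + 1))) (2 * k + 2) : ℤ))
      = ∑ v ∈ Finset.range (2 * k + 2), (k ^ 2 * (k - 1) : ℤ) := by
    rw [Finset.sum_congr rfl fun v hv =>
      (two_mul_vertexCrossings_squareWave (Finset.mem_range.mp hv)).symm, ← Finset.mul_sum]
    exact_mod_cast congrArg (2 * ·) hsum.symm
  rw [Finset.sum_const, Finset.card_range, nsmul_eq_mul] at htwice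
  push_cast at htwice
  linarith

lemma four_mul_crossings_odd (k : ℕ) :
    4 * (crossings (diagonalPages (squareWave (k + 1))) (2 * k + 1) : ℤ)
      = k * k * (k - 1) * (k - 1) := by
  have heven := four_mul_crossings_even k
  have hlast := two_mul_vertexCrossings_squareWave (k := k) (v := 2 * k + 1) (by omega)
  rw [crossings_succ] at heven
  push_cast at heven
  linarith

end Diagonal

section Hill

lemma eq_Zval_of_four_mul_eq {n c : ℕ}
    (h : 4 * c = n / 2 * ((n - 1) / 2) * ((n - 2) / 2) * ((n - 3) / 2)) : c = Zval n := by
  rw [Zval, ← h, Nat.mul_div_cancel_left c four_pos]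

lemma crossings_even_eq_Zval (k : ℕ) :
    crossings (diagonalPages (squareWave (k + 1))) (2 * k + 2) = Zval (2 * k + 2) := by
  have h := four_mul_crossings_even k
  apply eq_Zval_of_four_mul_eq
  rw [show (2 * k + 2) / 2 = k + 1 by omega, show (2 * k + 2 - 1) / 2 = k by omega,
    show (2 * k + 2 - 2) / 2 = k by omega, show (2 * k + 2 - 3) / 2 = k - 1 by omega]
  obtain _ | k := k
  · simpa using h
  · push_cast [add_sub_cancel_right] at h
    exact_mod_cast h

lemma crossings_odd_eq_Zval (k : ℕ) :
    crossings (diagonalPages (squareWave (k + 1))) (2 * k + 1) = Zval (2 * k + 1) := by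
  have h := four_mul_crossings_odd k
  apply eq_Zval_of_four_mul_eq
  rw [show (2 * k + 1) / 2 = k by omega, show (2 * k + 1 - 1) / 2 = k by omega,
    show (2 * k + 1 - 2) / 2 = k - 1 by omega, show (2 * k + 1 - 3) / 2 = k - 1 by omega]
  obtain _ | k := k
  · simpa using h
  · push_cast [add_sub_cancel_right] at h
    exact_mod_cast h

end Hill

/-- For every `n ≥ 1` there exists a simple x-monotone drawing of `K n`
with exactly `Z(n)` crossings. -/
theorem exists_simple_monotone_drawing_cr_eq_Z (n : ℕ) (hn : 1 ≤ n) :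
    ∃ D : XMonotoneDrawing n, D.Simple ∧ D.cr = Zval n := by
  obtain ⟨k, rfl | rfl⟩ : ∃ k, n = 2 * k + 1 ∨ n = 2 * k + 2 := ⟨(n - 1) / 2, by omega⟩
  all_goals
    refine ⟨twoPageDrawing (diagonalPages (squareWave (k + 1))) _, simple_twoPageDrawing _ _, ?_⟩
    rw [cr_twoPageDrawing]
  · exact crossings_odd_eq_Zval k
  · exact crossings_even_eq_Zval k
end
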